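/- For every sentence σ in the first-order language of rings and every prime p, the set {k ≥ 1 : σ holds in GaloisField p k} is eventually periodic: there exist K and n ≥ 1 such that for all k ≥ K, σ holds in GaloisField p k if and only if σ holds in GaloisField p (k + n). -/

import Mathlib

open FirstOrder

/-- Truth of a ring-language sentence in a ring `K`, with `K` viewed as a structure for
the language of rings via `compatibleRingOfRing`. -/
def RingSentenceHolds (σ : Language.ring.Sentence)
    (K : Type*) [Add K] [Mul K] [Neg K] [One K] [Zero K] : Prop :=
  letI := Ring.compatibleRingOfRing K
  K ⊨ σ

/-!
If periodicity fails for `σ`, there are exponents `κ N ≥ N` such that `σ` distinguishes the fields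
with `p ^ κ N` and `p ^ (κ N + N!)` elements. In an ultrapower `Ω` of the algebraic closure of
`𝔽_p`, the ultraproducts of these two families are the fixed fields of two nonstandard Frobenius
endomorphisms of `Ω`, which agree on the algebraic closure of `𝔽_p` because `N!` is eventually
divisible by every period. A back-and-forth argument then shows that the two fixed fields are
elementarily equivalent, where the finite pieces are countable algebraically closed fields `A` with
an endomorphism `τ`, embedded in `Ω` compatibly with either Frobenius. The extension step adjoins a
transcendental element to `A`. By saturation it reduces to a Chebotarev-type statement: over all
sufficiently large finite fields, a curve has a point whose Frobenius lies in a prescribed class,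
and not on a given finite set of exceptions. This is obtained by counting points with Stepanov's
polynomial method in Bombieri's form, whose bounds depend only on degrees.
-/

namespace EventualPeriodicity

open Polynomial Module Filter

universe u

section DegreeFiltration

variable {K V ι : Type*} [Field K] [AddCommGroup V] [Module K[X] V] [Module K V]
  [IsScalarTower K K[X] V] [Fintype ι] (b : Basis ι K[X] V)

/-- The elements of a finite free `K[X]`-module all of whose coordinates have degree `< M`:
the analogue on a curve over the affine line of the functions with poles of bounded order at
infinity. -/
noncomputable def coordDegreeLT (M : ℕ) : Submodule K V :=
  (Submodule.pi Set.univ fun _ : ι => degreeLT K M).comap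
    (b.equivFun.restrictScalars K : V →ₗ[K] ι → K[X])

variable {b}

lemma mem_coordDegreeLT {M : ℕ} {v : V} :
    v ∈ coordDegreeLT b M ↔ ∀ i, b.repr v i ∈ degreeLT K M := by
  simp [coordDegreeLT, Submodule.mem_pi]

lemma mul_mem_degreeLT {M N : ℕ} {f g : K[X]} (hf : f ∈ degreeLT K M) (hg : g ∈ degreeLT K N) :
    f * g ∈ degreeLT K (M + N) := by
  rcases eq_or_ne (f * g) 0 with h | h
  · simp [h]
  rw [mem_degreeLT, degree_eq_natDegree (left_ne_zero_of_mul h), Nat.cast_lt] at hf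
  rw [mem_degreeLT, degree_eq_natDegree (right_ne_zero_of_mul h), Nat.cast_lt] at hg
  rw [mem_degreeLT, degree_eq_natDegree h, Nat.cast_lt]
  exact natDegree_mul_le.trans_lt (add_lt_add hf hg)

lemma X_pow_mem_degreeLT {s M : ℕ} (h : s < M) : (X ^ s : K[X]) ∈ degreeLT K M := by
  rw [mem_degreeLT, degree_X_pow]
  exact_mod_cast h

lemma coordDegreeLT_mono {M N : ℕ} (h : M ≤ N) : coordDegreeLT b M ≤ coordDegreeLT b N :=
  fun _ hv => mem_coordDegreeLT.2 fun i => degreeLT_mono h (mem_coordDegreeLT.1 hv i)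

lemma exists_mem_coordDegreeLT (b : Basis ι K[X] V) (v : V) : ∃ M, v ∈ coordDegreeLT b M := by
  refine ⟨(Finset.univ.sup fun i => (b.repr v i).natDegree) + 1, mem_coordDegreeLT.2 fun i => ?_⟩
  rw [mem_degreeLT]
  refine degree_le_natDegree.trans_lt ?_
  exact_mod_cast Nat.lt_succ_of_le
    (Finset.le_sup (f := fun i => (b.repr v i).natDegree) (Finset.mem_univ i))

lemma smul_mem_coordDegreeLT {M N : ℕ} {f : K[X]} (hf : f ∈ degreeLT K M) {v : V}
    (hv : v ∈ coordDegreeLT b N) : f • v ∈ coordDegreeLT b (M + N) := by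
  refine mem_coordDegreeLT.2 fun i => ?_
  rw [map_smul, Finsupp.smul_apply, smul_eq_mul]
  exact mul_mem_degreeLT hf (mem_coordDegreeLT.1 hv i)

variable (b) in
/-- Coordinates and coefficients identify `coordDegreeLT b M` with a coordinate space. -/
noncomputable def coordDegreeLTEquiv (M : ℕ) : coordDegreeLT b M ≃ₗ[K] (ι → Fin M → K) :=
  (LinearEquiv.ofBijective
    (LinearMap.pi fun i => ((LinearMap.proj i).comp
      (b.equivFun.restrictScalars K : V →ₗ[K] ι → K[X])).restrict
        (p := coordDegreeLT b M) (q := degreeLT K M) fun v hv => by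
          simpa using mem_coordDegreeLT.1 hv i)
    ⟨(injective_iff_map_eq_zero _).2 fun v hv => by
        refine Subtype.ext (b.equivFun.injective (funext fun i => ?_))
        simpa using congrArg Subtype.val (congrFun hv i),
      fun w => by
        have hw : ⇑(b.repr (b.equivFun.symm fun i => (w i : K[X]))) = fun i => (w i : K[X]) :=
          b.equivFun.apply_symm_apply _
        exact ⟨⟨b.equivFun.symm fun i => w i, mem_coordDegreeLT.2 fun i => by
            rw [hw]; exact (w i).2⟩,
          funext fun i => Subtype.ext (congrFun hw i)⟩⟩).trans
    (LinearEquiv.piCongrRight fun _ => degreeLTEquiv K M)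

instance (M : ℕ) : FiniteDimensional K (coordDegreeLT b M) :=
  .of_injective (coordDegreeLTEquiv b M).toLinearMap (coordDegreeLTEquiv b M).injective

lemma finrank_coordDegreeLT (M : ℕ) :
    finrank K (coordDegreeLT b M) = Fintype.card ι * M := by
  rw [(coordDegreeLTEquiv b M).finrank_eq]
  simp [Module.finrank_pi_fintype]

lemma card_le_of_mem_coordDegreeLT {M : ℕ} {κ : Type*} [Fintype κ] {v : κ → V}
    (hv : LinearIndependent K v) (hM : ∀ i, v i ∈ coordDegreeLT b M) :
    Fintype.card κ ≤ Fintype.card ι * M := by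
  have : LinearIndependent K fun i => (⟨v i, hM i⟩ : coordDegreeLT b M) :=
    .of_comp (coordDegreeLT b M).subtype hv
  simpa [finrank_coordDegreeLT] using this.fintype_card_le_finrank

end DegreeFiltration

section DegreeFiltrationAlgebra

variable {K R ι : Type*} [Field K] [CommRing R] [Algebra K[X] R] [Algebra K R]
  [IsScalarTower K K[X] R] [Fintype ι] {b : Basis ι K[X] R} {c : ℕ}

lemma mul_mem_coordDegreeLT (hb : ∀ i j, b i * b j ∈ coordDegreeLT b c) {M N : ℕ} {r s : R}
    (hr : r ∈ coordDegreeLT b M) (hs : s ∈ coordDegreeLT b N) :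
    r * s ∈ coordDegreeLT b (M + N + c) := by
  rw [← b.sum_repr r, ← b.sum_repr s, Finset.sum_mul_sum]
  refine Submodule.sum_mem _ fun i _ => Submodule.sum_mem _ fun j _ => ?_
  rw [smul_mul_smul_comm]
  exact smul_mem_coordDegreeLT
    (mul_mem_degreeLT (mem_coordDegreeLT.1 hr i) (mem_coordDegreeLT.1 hs j)) (hb i j)

lemma pow_mem_coordDegreeLT (hb : ∀ i j, b i * b j ∈ coordDegreeLT b c) {M : ℕ} {r : R}
    (hr : r ∈ coordDegreeLT b M) {t : ℕ} (ht : 0 < t) :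
    r ^ t ∈ coordDegreeLT b (t * (M + c)) := by
  induction t, ht using Nat.le_induction with
  | base => simpa using coordDegreeLT_mono (by omega) hr
  | succ t _ ih =>
    rw [pow_succ]
    exact coordDegreeLT_mono (le_of_eq (by ring)) (mul_mem_coordDegreeLT hb ih hr)

end DegreeFiltrationAlgebra

section Zeros

variable {K R ι : Type*} [Field K] [CommRing R] [IsDomain R] [Algebra K[X] R] [Algebra K R]
  [IsScalarTower K K[X] R] [Fintype ι] {b : Basis ι K[X] R} {c : ℕ}

lemma card_le_of_linearIndependent_quotient (hb : ∀ i j, b i * b j ∈ coordDegreeLT b c) {H : ℕ}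
    {h : R} (hH : h ∈ coordDegreeLT b H) (h0 : h ≠ 0) {κ : Type*} [Fintype κ] {v : κ → R}
    (hv : LinearIndependent K fun i => Ideal.Quotient.mk (Ideal.span {h}) (v i)) :
    Fintype.card κ ≤ Fintype.card ι * (H + c) := by
  choose Mf hMf using fun i => exists_mem_coordDegreeLT b (v i)
  set M := Finset.univ.sup Mf
  have hvM (i) : v i ∈ coordDegreeLT b M :=
    coordDegreeLT_mono (Finset.le_sup (Finset.mem_univ i)) (hMf i)
  let e := Module.finBasis K (coordDegreeLT b M)
  have he : LinearIndependent K fun i => h * (e i : R) :=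
    (e.linearIndependent.map' (coordDegreeLT b M).subtype (Submodule.ker_subtype _)).map'
      (LinearMap.mulLeft K h) (LinearMap.ker_eq_bot.2 (mul_right_injective₀ h0))
  have hve : LinearIndependent K (Sum.elim v fun i => h * (e i : R)) := by
    refine LinearIndependent.sum_type
      (.of_comp (Ideal.Quotient.mkₐ K (Ideal.span {h})).toLinearMap hv) he ?_
    refine (Submodule.range_ker_disjoint
      (f := (Ideal.Quotient.mkₐ K (Ideal.span {h})).toLinearMap) hv).mono_right
      (Submodule.span_le.2 ?_)
    rintro _ ⟨i, rfl⟩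
    exact Ideal.Quotient.eq_zero_iff_mem.2
      (Ideal.mul_mem_right _ _ (Ideal.mem_span_singleton_self h))
  have hcard := card_le_of_mem_coordDegreeLT (M := H + M + c) hve <| by
    rintro (i | i)
    · exact coordDegreeLT_mono (by omega) (hvM i)
    · exact mul_mem_coordDegreeLT hb hH (e i).2
  rw [Fintype.card_sum, Fintype.card_fin, finrank_coordDegreeLT] at hcard
  linarith

lemma rank_quotient_le (hb : ∀ i j, b i * b j ∈ coordDegreeLT b c) {H : ℕ} {h : R}
    (hH : h ∈ coordDegreeLT b H) (h0 : h ≠ 0) :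
    Module.rank K (R ⧸ Ideal.span {h}) ≤ (Fintype.card ι * (H + c) : ℕ) := by
  refine rank_le fun s hs => ?_
  choose v hv using Ideal.Quotient.mk_surjective (I := Ideal.span {h})
  simpa using card_le_of_linearIndependent_quotient hb hH h0
    (v := fun i : s => v i) (by simpa [hv] using hs)

lemma finite_quotient (hb : ∀ i j, b i * b j ∈ coordDegreeLT b c) {h : R} (h0 : h ≠ 0) :
    Module.Finite K (R ⧸ Ideal.span {h}) := by
  obtain ⟨H, hH⟩ := exists_mem_coordDegreeLT b h
  exact Module.rank_lt_aleph0_iff.1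
    ((rank_quotient_le hb hH h0).trans_lt Cardinal.natCast_lt_aleph0)

lemma finrank_quotient_le (hb : ∀ i j, b i * b j ∈ coordDegreeLT b c) {H : ℕ} {h : R}
    (hH : h ∈ coordDegreeLT b H) (h0 : h ≠ 0) :
    finrank K (R ⧸ Ideal.span {h}) ≤ Fintype.card ι * (H + c) :=
  finrank_le_of_rank_le (rank_quotient_le hb hH h0)

lemma card_zeros_le (hb : ∀ i j, b i * b j ∈ coordDegreeLT b c) {H : ℕ} {h : R}
    (hH : h ∈ coordDegreeLT b H) (h0 : h ≠ 0) (s : Finset (R →ₐ[K] K)) (hs : ∀ P ∈ s, P h = 0) :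
    s.card ≤ Fintype.card ι * (H + c) := by
  have := finite_quotient hb h0
  have hker (P : s) (a : R) (ha : a ∈ Ideal.span {h}) : P.1 a = 0 :=
    (Ideal.span_singleton_le_iff_mem (I := RingHom.ker P.1)).2 (hs P.1 P.2) ha
  have hinj : Function.Injective fun P : s => Ideal.Quotient.liftₐ (Ideal.span {h}) P.1 (hker P) :=
    fun P Q hPQ => Subtype.ext <| AlgHom.ext fun a =>
      AlgHom.congr_fun hPQ (Ideal.Quotient.mk _ a)
  calc s.card = Nat.card s := by simp
    _ ≤ Nat.card (R ⧸ Ideal.span {h} →ₐ[K] K) := Nat.card_le_card_of_injective _ hinj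
    _ ≤ finrank K (R ⧸ Ideal.span {h}) := card_algHom_le_finrank K _ K
    _ ≤ _ := finrank_quotient_le hb hH h0

lemma eq_zero_of_infinite_zeros (hb : ∀ i j, b i * b j ∈ coordDegreeLT b c) {h : R}
    {Z : Set (R →ₐ[K] K)} (hZ : Z.Infinite) (hz : ∀ P ∈ Z, P h = 0) : h = 0 := by
  by_contra h0
  obtain ⟨H, hH⟩ := exists_mem_coordDegreeLT b h
  obtain ⟨t, ht, htc⟩ := hZ.exists_subset_card_eq (Fintype.card ι * (H + c) + 1)
  have := card_zeros_le hb hH h0 t fun P hP => hz P (ht hP)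
  omega

lemma exists_dvd_pow_mul_aeval (hb : ∀ i j, b i * b j ∈ coordDegreeLT b c) {H : ℕ} {h : R}
    (hH : h ∈ coordDegreeLT b H) (h0 : h ≠ 0) (T : R) :
    ∃ i ≤ Fintype.card ι * (H + c), ∃ g : K[X], g.eval 0 ≠ 0 ∧ h ∣ T ^ i * aeval T g := by
  classical
  have := finite_quotient hb h0
  let g := minpoly K (Ideal.Quotient.mk (Ideal.span {h}) T)
  obtain ⟨g₁, hg₁, hdiv⟩ := exists_eq_pow_rootMultiplicity_mul_and_not_dvd g
    (minpoly.ne_zero (Algebra.IsIntegral.isIntegral _)) 0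
  rw [C_0, sub_zero] at hg₁ hdiv
  refine ⟨g.rootMultiplicity 0, ?_, g₁,
    by rwa [X_dvd_iff, coeff_zero_eq_eval_zero] at hdiv, ?_⟩
  · calc g.rootMultiplicity 0 = g.roots.count 0 := (count_roots g).symm
      _ ≤ g.natDegree := (Multiset.count_le_card _ _).trans (card_roots' g)
      _ ≤ _ := (minpoly.natDegree_le _).trans (finrank_quotient_le hb hH h0)
  · have hg : T ^ g.rootMultiplicity 0 * aeval T g₁ = aeval T g := by
      conv_rhs => rw [hg₁]
      simp
    rw [hg, ← Ideal.mem_span_singleton, ← Ideal.Quotient.eq_zero_iff_mem,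
      ← Ideal.Quotient.mkₐ_eq_mk K, ← aeval_algHom_apply]
    exact minpoly.aeval K _

end Zeros

section UnramifiedPoints

variable {K R ι : Type*} [Field K] [CommRing R] [Algebra K[X] R] [Algebra K R]

/-- A rational point `P` of a curve over the affine line is unramified if, near `P`, every
function vanishing at `P` is divisible by the coordinate `X - X(P)`. -/
def IsUnramifiedAt (P : R →ₐ[K] K) : Prop :=
  ∃ e : R, P e ≠ 0 ∧ ∀ u, P u = 0 →
    algebraMap K[X] R (X - C (P (algebraMap K[X] R X))) ∣ u * e

variable [IsScalarTower K K[X] R]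

lemma apply_algebraMap_eq_eval (P : R →ₐ[K] K) (f : K[X]) :
    P (algebraMap K[X] R f) = f.eval (P (algebraMap K[X] R X)) := by
  rw [← coe_aeval_eq_eval, aeval_algHom_apply, aeval_algebraMap_apply, aeval_X_left_apply]

variable [IsDomain R] [Fintype ι] {b : Basis ι K[X] R} {c : ℕ}

lemma eq_zero_of_pow_dvd (hb : ∀ i j, b i * b j ∈ coordDegreeLT b c) {l Q : ℕ}
    {h : R} (hl : h ∈ coordDegreeLT b l) (hQ : Fintype.card ι * (l + c) < Q) (P : R →ₐ[K] K)
    {e : R} (he : P e ≠ 0)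
    (hdvd : algebraMap K[X] R (X - C (P (algebraMap K[X] R X))) ^ Q ∣ h * e ^ Q) : h = 0 := by
  by_contra h0
  set T : R := algebraMap K[X] R (X - C (P (algebraMap K[X] R X))) with hT
  have hPT : P T = 0 := by rw [hT, apply_algebraMap_eq_eval]; simp
  have hT0 : T ≠ 0 := by
    have := Module.Free.of_basis b
    exact (map_ne_zero_iff _ (FaithfulSMul.algebraMap_injective K[X] R)).2 (X_sub_C_ne_zero _)
  obtain ⟨i, hi, g, hg0, u, hu⟩ := exists_dvd_pow_mul_aeval hb hl h0 T
  have hiQ : i < Q := hi.trans_lt hQ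
  obtain ⟨x, hx⟩ := hdvd
  have hcancel : aeval T g * e ^ Q = T ^ (Q - i) * (x * u) := by
    refine mul_left_cancel₀ (pow_ne_zero i hT0) ?_
    calc T ^ i * (aeval T g * e ^ Q) = h * e ^ Q * u := by rw [← mul_assoc, hu]; ring
      _ = T ^ i * (T ^ (Q - i) * (x * u)) := by
        rw [hx, ← Nat.add_sub_cancel' hiQ.le, pow_add, Nat.add_sub_cancel_left]; ring
  have hval := congrArg P hcancel
  rw [map_mul, map_mul, map_pow, map_pow, hPT, zero_pow (by omega), zero_mul,
    ← aeval_algHom_apply, hPT, coe_aeval_eq_eval] at hval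
  exact mul_ne_zero hg0 (pow_ne_zero Q he) hval

end UnramifiedPoints

section Stepanov

variable {K R ι κ : Type*} [Field K] [CommRing R] [IsDomain R] [Algebra K[X] R] [Algebra K R]
  [IsScalarTower K K[X] R] [Fintype ι] {b : Basis ι K[X] R} {c : ℕ} [Fintype κ]
  (p : ℕ) [Fact p.Prime] [CharP K p]

lemma sum_apply_pow_smul_eq_zero (hb : ∀ i j, b i * b j ∈ coordDegreeLT b c) {l k : ℕ}
    (hk : Fintype.card ι * (l + c) < p ^ k) {s ν : κ → R} (hν : ∀ i, ν i ∈ coordDegreeLT b l)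
    (hsum : ∑ i, ν i * s i ^ p ^ k = 0) {P : R →ₐ[K] K} (hP : IsUnramifiedAt P) :
    ∑ i, P (s i) ^ p ^ k • ν i = 0 := by
  have : CharP R p := charP_of_injective_algebraMap (algebraMap K R).injective p
  obtain ⟨e, he, hdvd⟩ := hP
  refine eq_zero_of_pow_dvd hb
    (Submodule.sum_mem _ fun i _ => Submodule.smul_mem _ _ (hν i)) hk P he ?_
  have hneg : ∑ i, P (s i) ^ p ^ k • ν i
      = -∑ i, ν i * (s i - algebraMap K R (P (s i))) ^ p ^ k := by
    simp only [sub_pow_char_pow, mul_sub, Finset.sum_sub_distrib, hsum, zero_sub, neg_neg,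
      Algebra.smul_def, map_pow, mul_comm]
  rw [hneg, neg_mul, dvd_neg, Finset.sum_mul]
  refine Finset.dvd_sum fun i _ => ?_
  rw [mul_assoc, ← mul_pow]
  exact (pow_dvd_pow_of_dvd (hdvd _ (by simp)) _).mul_left _

variable [PerfectRing K p]

lemma exists_sum_pow_mul_eq_zero (hb : ∀ i j, b i * b j ∈ coordDegreeLT b c) {l L t : ℕ}
    {z : κ → R} (hz : ∀ i, z i ∈ coordDegreeLT b L)
    (hdim : Fintype.card ι * (p ^ t * (l + c) + L + c) < Fintype.card ι * l * Fintype.card κ) :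
    ∃ ν : κ → R, (∀ i, ν i ∈ coordDegreeLT b l) ∧ ν ≠ 0 ∧ ∑ i, ν i ^ p ^ t * z i = 0 := by
  have : CharP R p := charP_of_injective_algebraMap (algebraMap K R).injective p
  let e := Module.finBasis K (coordDegreeLT b l)
  have hdep : ¬ LinearIndependent K fun x : κ × Fin _ => (e x.2 : R) ^ p ^ t * z x.1 := by
    intro h
    have := card_le_of_mem_coordDegreeLT h fun x => mul_mem_coordDegreeLT hb
      (pow_mem_coordDegreeLT hb (e x.2).2 (pow_pos (Fact.out : p.Prime).pos t)) (hz x.1)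
    rw [Fintype.card_prod, Fintype.card_fin, finrank_coordDegreeLT, mul_comm] at this
    omega
  rw [Fintype.linearIndependent_iff] at hdep
  push Not at hdep
  obtain ⟨a, ha, x₀, hx₀⟩ := hdep
  let r (x) : K := (iterateFrobeniusEquiv K p t).symm (a x)
  have hr (x) : r x ^ p ^ t = a x := by
    rw [← iterateFrobenius_def, ← coe_iterateFrobeniusEquiv]
    exact (iterateFrobeniusEquiv K p t).apply_symm_apply _
  let ν (i : κ) : coordDegreeLT b l := ∑ y, r (i, y) • e y
  refine ⟨fun i => ν i, fun i => (ν i).2, fun h => hx₀ ?_, ?_⟩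
  · have hν : ν x₀.1 = 0 := Subtype.ext (congrFun h x₀.1)
    rw [← hr, Fintype.linearIndependent_iff.1 e.linearIndependent _ hν x₀.2,
      zero_pow (pow_ne_zero _ (Fact.out : p.Prime).ne_zero)]
  · rw [← ha, Fintype.sum_prod_type]
    refine Finset.sum_congr rfl fun i _ => ?_
    simp only [ν, Submodule.coe_sum, Submodule.coe_smul, sum_pow_char_pow, Finset.sum_mul,
      _root_.smul_pow, hr, smul_mul_assoc]

/-- Comparing the `p ^ k`-th powers with their values at infinitely many unramified points turns a
relation with coefficients of low degree into one with constant coefficients. -/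
lemma eq_zero_of_sum_mul_pow_eq_zero (hb : ∀ i j, b i * b j ∈ coordDegreeLT b c)
    {G : Set (R →ₐ[K] K)} (hG : G.Infinite) (hGu : ∀ P ∈ G, IsUnramifiedAt P) {l k : ℕ}
    (hk : Fintype.card ι * (l + c) < p ^ k) {s ν : κ → R} (hs : LinearIndependent K s)
    (hν : ∀ i, ν i ∈ coordDegreeLT b l) (hsum : ∑ i, ν i * s i ^ p ^ k = 0) : ν = 0 := by
  funext i₀
  refine (Module.forall_dual_apply_eq_zero_iff K (ν i₀)).1 fun φ => ?_
  let r (i) : K := (iterateFrobeniusEquiv K p k).symm (φ (ν i))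
  have hr (i) : r i ^ p ^ k = φ (ν i) := by
    rw [← iterateFrobenius_def, ← coe_iterateFrobeniusEquiv]
    exact (iterateFrobeniusEquiv K p k).apply_symm_apply _
  have hzero : ∑ i, r i • s i = 0 := by
    refine eq_zero_of_infinite_zeros hb hG fun P hP => ?_
    have hval := congrArg φ (sum_apply_pow_smul_eq_zero p hb hk hν hsum (hGu P hP))
    refine eq_zero_of_pow_eq_zero (n := p ^ k) ?_
    simpa [sum_pow_char_pow, mul_pow, hr, mul_comm] using hval
  rw [← hr, Fintype.linearIndependent_iff.1 hs r hzero i₀,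
    zero_pow (pow_ne_zero _ (Fact.out : p.Prime).ne_zero)]

/-- Stepanov's method, in Bombieri's form: a function built from the `s i` that vanishes at every
point where the `p ^ (t + k)`-power Frobenius acts on the `s i` as prescribed by the `z i`. -/
theorem card_le_of_prescribed_frobenius (hb : ∀ i j, b i * b j ∈ coordDegreeLT b c)
    {G : Set (R →ₐ[K] K)} (hG : G.Infinite) (hGu : ∀ P ∈ G, IsUnramifiedAt P) {l L k t : ℕ}
    (hk : Fintype.card ι * (l + c) < p ^ k)
    (hdim : Fintype.card ι * (p ^ t * (l + c) + L + c) < Fintype.card ι * l * Fintype.card κ)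
    {s z : κ → R} (hs : LinearIndependent K s) (hsL : ∀ i, s i ∈ coordDegreeLT b L)
    (hzL : ∀ i, z i ∈ coordDegreeLT b L) (d : R) (T : Finset (R →ₐ[K] K))
    (hTd : ∀ P ∈ T, P d ≠ 0) (hT : ∀ P ∈ T, ∀ i, P d * P (s i) ^ p ^ (t + k) = P (z i)) :
    T.card ≤ Fintype.card ι * (l + p ^ k * (L + c) + c + c) := by
  obtain ⟨ν, hνl, hν0, hν⟩ := exists_sum_pow_mul_eq_zero p hb hzL hdim
  have hne : ∑ i, ν i * s i ^ p ^ k ≠ 0 := fun h =>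
    hν0 (eq_zero_of_sum_mul_pow_eq_zero p hb hG hGu hk hs hνl h)
  have hmem : ∑ i, ν i * s i ^ p ^ k ∈ coordDegreeLT b (l + p ^ k * (L + c) + c) :=
    Submodule.sum_mem _ fun i _ => mul_mem_coordDegreeLT hb (hνl i)
      (pow_mem_coordDegreeLT hb (hsL i) (pow_pos (Fact.out : p.Prime).pos k))
  refine card_zeros_le hb hmem hne T fun P hP => ?_
  have hvanish : P d * P (∑ i, ν i * s i ^ p ^ k) ^ p ^ t = 0 := by
    rw [← map_zero P, ← hν, map_sum, map_sum, sum_pow_char_pow, Finset.mul_sum]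
    refine Finset.sum_congr rfl fun i _ => ?_
    rw [map_mul, map_mul, ← hT P hP, map_pow, map_pow, mul_pow, ← pow_mul, ← pow_add, add_comm k t]
    ring
  exact eq_zero_of_pow_eq_zero ((mul_eq_zero.1 hvanish).resolve_left (hTd P hP))

end Stepanov

section Counting

section Parameters

variable {m n c r Q : ℕ}

lemma stepanov_degree_lt (hr : m * (4 * c + 3) < r) (hQ : r * r ≤ Q) :
    m * (r * (c + 1) + 2 * c + 2 + c) < Q :=
  calc m * (r * (c + 1) + 2 * c + 2 + c) ≤ m * (r * (4 * c + 3)) :=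
        Nat.mul_le_mul_left _ <| by
          have : 1 * (3 * c + 2) ≤ r * (3 * c + 2) := Nat.mul_le_mul_right _ (by omega)
          linarith
    _ = r * (m * (4 * c + 3)) := by ring
    _ < r * r := Nat.mul_lt_mul_of_pos_left hr (by omega)
    _ ≤ Q := hQ

lemma stepanov_dim_lt (hm : 0 < m) (hn : 0 < n) :
    m * (r * (r * (c + 1) + 2 * c + 2 + c) + (r / n + 1 + c) + c) <
      m * (r * (c + 1) + 2 * c + 2) * ((r / n + 1) * n) := by
  rw [mul_assoc]
  refine Nat.mul_lt_mul_of_pos_left ?_ hm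
  have hM : r + 1 ≤ (r / n + 1) * n := Nat.lt_mul_of_div_lt (by omega) hn
  refine lt_of_lt_of_le ?_ (Nat.mul_le_mul_left _ hM)
  have := Nat.div_le_self r n
  nlinarith

lemma stepanov_bound_lt (hm : 0 < m) {n' : ℕ} (hn : n' < n)
    (hr : m * (4 * c + 3) + n * n * (3 * c + 3) < r) (hQ : r * r ≤ Q) :
    n' * (m * (r * (c + 1) + 2 * c + 2 + Q * (r / n + 1 + c + c) + c + c)) + m * c <
      m * (r * Q) := by
  set l := r * (c + 1) + 2 * c + 2
  set M := r / n + 1 with hM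
  have hlQ : l + c < Q := (Nat.le_mul_of_pos_left _ hm).trans_lt
    (stepanov_degree_lt (lt_of_le_of_lt (by omega) hr) hQ)
  have hMn : M * n ≤ r + n := by
    rw [hM, add_mul, one_mul]
    exact Nat.add_le_add_right (Nat.div_mul_le_self r n) n
  have hbound : n * (l + Q * (M + c + c) + c + c) ≤ Q * (r + n * (2 * c + 3)) :=
    calc n * (l + Q * (M + c + c) + c + c)
        = n * (l + c) + n * c + Q * (M * n) + Q * n * (2 * c) := by ring
      _ ≤ n * Q + n * Q + Q * (r + n) + Q * n * (2 * c) := by gcongr; omega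
      _ = Q * (r + n * (2 * c + 3)) := by ring
  refine lt_of_mul_lt_mul_left (a := n) ?_ (Nat.zero_le n)
  calc n * (n' * (m * (l + Q * (M + c + c) + c + c)) + m * c)
      = m * (n' * (n * (l + Q * (M + c + c) + c + c)) + n * c) := by ring
    _ ≤ m * (n' * (Q * (r + n * (2 * c + 3))) + n * c) := by gcongr
    _ ≤ m * (n' * r * Q + n * (Q * (n * (2 * c + 3))) + n * (n * c) * Q) := by
      gcongr m * ?_
      have : n * c ≤ n * (n * c) * Q := by
        calc n * c = n * (1 * c) * 1 := by ring
          _ ≤ n * (n * c) * Q := by gcongr <;> omega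
      have : n' * (Q * (n * (2 * c + 3))) ≤ n * (Q * (n * (2 * c + 3))) := by gcongr
      linarith
    _ = m * (Q * (n' * r + n * n * (3 * c + 3))) := by ring
    _ < m * (Q * (n' * r + r)) := by gcongr <;> omega
    _ ≤ n * (m * (r * Q)) := by
      rw [← Nat.succ_mul]
      calc m * (Q * (n'.succ * r)) ≤ m * (Q * (n * r)) := by gcongr; omega
        _ = n * (m * (r * Q)) := by ring

end Parameters

variable {K R ι κ β : Type*} [Field K] [CommRing R] [Algebra K[X] R] [Algebra K R] [Fintype ι]

lemma exists_finset_frobenius_fixed [IsAlgClosed K] (p : ℕ) [Fact p.Prime] [CharP K p] {k : ℕ}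
    (hk : 0 < k) {D : K[X]} (hD : D ≠ 0) :
    ∃ F : Finset K, p ^ k ≤ F.card + D.natDegree ∧ ∀ a ∈ F, a ^ p ^ k = a ∧ D.eval a ≠ 0 := by
  classical
  let f : K[X] := X ^ p ^ k - X
  have hq : 1 < p ^ k := Nat.one_lt_pow hk.ne' (Fact.out : p.Prime).one_lt
  have hcard : f.roots.toFinset.card = p ^ k := by
    rw [Multiset.toFinset_card_of_nodup
      (nodup_roots (galois_poly_separable p _ (dvd_pow_self p hk.ne'))),
      ← (IsAlgClosed.splits f).natDegree_eq_card_roots,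
      FiniteField.X_pow_card_sub_X_natDegree_eq K hq]
  refine ⟨f.roots.toFinset \ D.roots.toFinset, ?_, fun a ha => ?_⟩
  · have h₁ := Finset.le_card_sdiff D.roots.toFinset f.roots.toFinset
    have h₂ := (Multiset.toFinset_card_le D.roots).trans D.card_roots'
    omega
  · simp only [Finset.mem_sdiff, Multiset.mem_toFinset, mem_roots hD,
      mem_roots (FiniteField.X_pow_card_sub_X_ne_zero K hq), IsRoot.def, f] at ha
    exact ⟨by simpa [sub_eq_zero] using ha.1, ha.2⟩

lemma exists_finset_points_over (F : Finset K)
    (hF : ∀ a ∈ F, ∃ P : ι → (R →ₐ[K] K), P.Injective ∧ ∀ i, P i (algebraMap K[X] R X) = a) :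
    ∃ T : Finset (R →ₐ[K] K), T.card = F.card * Fintype.card ι ∧
      ∀ P ∈ T, P (algebraMap K[X] R X) ∈ F := by
  classical
  choose P hPinj hP using hF
  refine ⟨F.attach.biUnion fun a => Finset.univ.image (P a a.2), ?_, ?_⟩
  · rw [Finset.card_biUnion]
    · simp [Finset.card_image_of_injective _ (hPinj _ _)]
    · intro a _ a' _ haa'
      refine Finset.disjoint_left.2 fun x hx hx' => haa' (Subtype.ext ?_)
      obtain ⟨i, -, rfl⟩ := Finset.mem_image.1 hx
      obtain ⟨j, -, hj⟩ := Finset.mem_image.1 hx'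
      rw [← hP a a.2 i, ← hP a' a'.2 j, hj]
  · intro x hx
    obtain ⟨a, -, ha⟩ := Finset.mem_biUnion.1 hx
    obtain ⟨i, -, rfl⟩ := Finset.mem_image.1 ha
    exact (hP a a.2 i).symm ▸ a.2

lemma infinite_points [Infinite K] {D : K[X]} (hD : D ≠ 0)
    (hpts : ∀ a, D.eval a ≠ 0 → ∃ P : R →ₐ[K] K, P (algebraMap K[X] R X) = a) :
    {P : R →ₐ[K] K | D.eval (P (algebraMap K[X] R X)) ≠ 0}.Infinite := by
  refine .of_image (fun P => P (algebraMap K[X] R X)) (Set.Infinite.mono ?_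
    (finite_setOfPred_isRoot hD).infinite_compl)
  intro a ha
  obtain ⟨P, rfl⟩ := hpts a ha
  exact ⟨P, ha, rfl⟩

variable [IsDomain R] [IsScalarTower K K[X] R] {b : Basis ι K[X] R} {c : ℕ} [Fintype κ]

lemma card_branch_le (p : ℕ) [Fact p.Prime] [CharP K p] [PerfectRing K p]
    (hb : ∀ i j, b i * b j ∈ coordDegreeLT b c) {S z : κ → R} (hS : LinearIndependent K[X] S)
    (hSc : ∀ j, S j ∈ coordDegreeLT b c) (hzc : ∀ j, z j ∈ coordDegreeLT b c) [Nonempty κ]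
    {G : Set (R →ₐ[K] K)} (hG : G.Infinite) (hGu : ∀ P ∈ G, IsUnramifiedAt P) {t s : ℕ}
    (ht : Fintype.card ι * (4 * c + 3) < p ^ t) (hts : p ^ t * p ^ t ≤ p ^ s) {d : R}
    {T : Finset (R →ₐ[K] K)} (hTd : ∀ P ∈ T, P d ≠ 0)
    (hTX : ∀ P ∈ T, P (algebraMap K[X] R X) ^ p ^ (t + s) = P (algebraMap K[X] R X))
    (hTS : ∀ P ∈ T, ∀ j, P d * P (S j) ^ p ^ (t + s) = P (z j)) :
    T.card ≤ Fintype.card ι * (p ^ t * (c + 1) + 2 * c + 2 +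
      p ^ s * (p ^ t / Fintype.card κ + 1 + c + c) + c + c) := by
  have : Nonempty ι := b.index_nonempty
  refine card_le_of_prescribed_frobenius p hb hG hGu (t := t)
    (κ := Fin (p ^ t / Fintype.card κ + 1) × κ) (s := fun i => (X ^ (i.1 : ℕ) : K[X]) • S i.2)
    (z := fun i => (X ^ (i.1 : ℕ) : K[X]) • z i.2) (stepanov_degree_lt ht hts) ?_ ?_
    (fun i => smul_mem_coordDegreeLT (X_pow_mem_degreeLT i.1.2) (hSc i.2))
    (fun i => smul_mem_coordDegreeLT (X_pow_mem_degreeLT i.1.2) (hzc i.2)) d T hTd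
    fun P hP i => ?_
  · simpa using stepanov_dim_lt (c := c) (r := p ^ t) (Fintype.card_pos (α := ι))
      (Fintype.card_pos (α := κ))
  · have hX : LinearIndependent K
        fun i : Fin (p ^ t / Fintype.card κ + 1) => (X : K[X]) ^ (i : ℕ) := by
      simpa [Function.comp_def, X_pow_eq_monomial] using
        (basisMonomials K).linearIndependent.comp _ Fin.val_injective
    exact linearIndependent_smul hX hS
  · rw [Algebra.smul_def, Algebra.smul_def, map_mul, map_mul, ← hTS P hP, map_pow, map_pow, mul_pow,
      pow_right_comm, hTX P hP]
    ring

variable [Fintype β]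

/-- The number of points over the fixed field of Frobenius is about `card ι * p ^ k`, and Stepanov's
method allows at most about a `card κ`-th part of them on each branch; since there are at most
`card κ` branches, none of them is empty. -/
theorem exists_point_on_branch [IsAlgClosed K] (p : ℕ) [Fact p.Prime] [CharP K p] {k : ℕ}
    (hk : 3 * (Fintype.card ι * (4 * c + 3) +
      Fintype.card κ * Fintype.card κ * (3 * c + 3) + 1) ≤ k)
    (hb : ∀ i j, b i * b j ∈ coordDegreeLT b c) (hβ : Fintype.card β ≤ Fintype.card κ)
    {S : κ → R} (hS : LinearIndependent K[X] S) {Z : β → κ → R}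
    (hSc : ∀ j, S j ∈ coordDegreeLT b c) (hZc : ∀ i j, Z i j ∈ coordDegreeLT b c) {d : R}
    {D : K[X]} (hD : D ≠ 0) (hDc : D.natDegree ≤ c)
    (hpts : ∀ a : K, D.eval a ≠ 0 →
      ∃ P : ι → (R →ₐ[K] K), P.Injective ∧ ∀ i, P i (algebraMap K[X] R X) = a)
    (hunr : ∀ P : R →ₐ[K] K, D.eval (P (algebraMap K[X] R X)) ≠ 0 → IsUnramifiedAt P ∧ P d ≠ 0)
    (E : β → Set (R →ₐ[K] K))
    (hcover : ∀ P : R →ₐ[K] K, D.eval (P (algebraMap K[X] R X)) ≠ 0 →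
      P (algebraMap K[X] R X) ^ p ^ k = P (algebraMap K[X] R X) → ∃ i, P ∈ E i)
    (hE : ∀ i, ∀ P ∈ E i, ∀ j, P d * P (S j) ^ p ^ k = P (Z i j)) (i₀ : β) :
    ∃ P ∈ E i₀, P (algebraMap K[X] R X) ^ p ^ k = P (algebraMap K[X] R X) ∧
      D.eval (P (algebraMap K[X] R X)) ≠ 0 := by
  classical
  have : Nonempty ι := b.index_nonempty
  have hβ₀ := Fintype.card_pos_iff.2 ⟨i₀⟩
  have : Nonempty κ := Fintype.card_pos_iff.1 (hβ₀.trans_le hβ)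
  obtain ⟨t, s, rfl, hkt, hts⟩ : ∃ t s, t + s = k ∧ k / 3 = t ∧ p ^ t * p ^ t ≤ p ^ s := by
    refine ⟨k / 3, k - k / 3, by omega, rfl, ?_⟩
    rw [← pow_add]
    exact Nat.pow_le_pow_right (Fact.out : p.Prime).pos (by omega)
  have ht : Fintype.card ι * (4 * c + 3) + Fintype.card κ * Fintype.card κ * (3 * c + 3) < p ^ t :=
    lt_of_lt_of_le (by omega) (Nat.lt_pow_self (Fact.out : p.Prime).one_lt).le
  have hG := infinite_points (R := R) hD fun a ha =>
    let ⟨P, _, hP⟩ := hpts a ha; ⟨P (Classical.arbitrary ι), hP _⟩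
  obtain ⟨F, hFcard, hF⟩ := exists_finset_frobenius_fixed p (show 0 < t + s by omega) hD
  obtain ⟨T, hTcard, hT⟩ := exists_finset_points_over F fun a ha => hpts a (hF a ha).2
  by_contra! hempty
  have hcov : T ⊆ (Finset.univ.erase i₀).biUnion fun i => T.filter (· ∈ E i) := fun P hP => by
    obtain ⟨hfix, hDP⟩ := hF _ (hT P hP)
    obtain ⟨i, hi⟩ := hcover P hDP hfix
    have hi₀ : i ≠ i₀ := fun h => hDP (hempty P (h ▸ hi) hfix)
    exact Finset.mem_biUnion.2 ⟨i, by simpa using hi₀, Finset.mem_filter.2 ⟨hP, hi⟩⟩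
  have hle := (Finset.card_le_card hcov).trans <| Finset.card_biUnion_le_card_mul _ _ _ fun i _ =>
    card_branch_le p hb hS hSc (hZc i) hG (fun P hP => (hunr P hP).1)
      ((Nat.le_add_right _ _).trans_lt ht) hts (d := d) (T := T.filter (· ∈ E i))
      (fun P hP => (hunr P (hF _ (hT P (Finset.mem_filter.1 hP).1)).2).2)
      (fun P hP => (hF _ (hT P (Finset.mem_filter.1 hP).1)).1)
      (fun P hP => hE i P (Finset.mem_filter.1 hP).2)
  rw [Finset.card_erase_of_mem (Finset.mem_univ _), Finset.card_univ] at hle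
  have hlt := stepanov_bound_lt (Fintype.card_pos (α := ι))
    (show Fintype.card β - 1 < Fintype.card κ by omega) ht hts
  rw [← pow_add] at hlt
  have hcount : Fintype.card ι * p ^ (t + s) ≤ T.card + Fintype.card ι * c := by
    rw [hTcard, mul_comm F.card, ← mul_add]
    exact Nat.mul_le_mul_left _ (by omega)
  omega

end Counting

section Germs

variable {ι k S : Type*} {l : Filter ι}

lemma exists_forall_eventually_of_tendsto {Y : ι → Type*} [∀ N, Nonempty (Y N)] {κ : ι → ℕ}
    (hκ : Tendsto κ l atTop) (c : ℕ → ∀ N, Y N → Prop)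
    (h : ∀ n, ∀ᶠ N in l, ∃ y : Y N, ∀ i < n, c i N y) :
    ∃ y : ∀ N, Y N, ∀ i, ∀ᶠ N in l, c i N (y N) := by
  classical
  let P (N n) : Prop := ∃ y : Y N, ∀ i < n, c i N y
  have hP (N) : P N (Nat.findGreatest (P N) (κ N)) :=
    Nat.findGreatest_spec (Nat.zero_le _) ⟨Classical.arbitrary _, by simp⟩
  choose y hy using hP
  refine ⟨y, fun i => ?_⟩
  filter_upwards [h (i + 1), hκ.eventually_ge_atTop (i + 1)] with N hN hi
  exact hy N i (Nat.le_findGreatest hi hN)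

variable [CommRing k] [CommRing S]

/-- The homomorphism to the reduced power of `k` defined by a family of homomorphisms to `k`. -/
def germHom (l : Filter ι) (h : ι → S →+* k) : S →+* l.Germ k :=
  (Germ.coeRingHom l).comp (RingHom.pi h)

lemma germHom_apply (h : ι → S →+* k) (s : S) :
    germHom l h s = ((fun N => h N s : ι → k) : l.Germ k) := rfl

lemma germHom_eq_zero_iff {h : ι → S →+* k} {s : S} :
    germHom l h s = 0 ↔ ∀ᶠ N in l, h N s = 0 :=
  Germ.coe_eq

lemma exists_germHom_eq_of_mvPolynomial {σ : Type*} (f : MvPolynomial σ ℤ →+* l.Germ k) :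
    ∃ h : ι → MvPolynomial σ ℤ →+* k, germHom l h = f := by
  choose v hv using fun i => Quotient.exists_rep (f (.X i))
  refine ⟨fun N => MvPolynomial.eval₂Hom (Int.castRingHom k) fun i => v i N,
    MvPolynomial.ringHom_ext' (Subsingleton.elim _ _) fun i => ?_⟩
  rw [germHom_apply]
  simp only [MvPolynomial.coe_eval₂Hom, MvPolynomial.eval₂_X]
  exact hv i

lemma exists_germHom_eq [l.NeBot] [Algebra.FiniteType ℤ S] (f : S →+* l.Germ k) :
    ∃ h : ι → S →+* k, germHom l h = f := by
  classical
  obtain ⟨n, q, hq⟩ := Algebra.FiniteType.iff_quotient_mvPolynomial''.1 ‹Algebra.FiniteType ℤ S›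
  obtain ⟨H, hH⟩ := exists_germHom_eq_of_mvPolynomial (f.comp (q : MvPolynomial (Fin n) ℤ →+* S))
  obtain ⟨G, hG⟩ := (isNoetherianRing_iff_ideal_fg _).1 inferInstance
    (RingHom.ker (q : MvPolynomial (Fin n) ℤ →+* S))
  have hker : ∀ᶠ N in l, RingHom.ker (q : MvPolynomial (Fin n) ℤ →+* S) ≤ RingHom.ker (H N) := by
    have hG0 : ∀ᶠ N in l, ∀ g ∈ G, H N g = 0 := by
      refine (Filter.eventually_all_finset G).2 fun g hg => ?_
      have : g ∈ RingHom.ker (q : MvPolynomial (Fin n) ℤ →+* S) := hG ▸ Ideal.subset_span hg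
      rw [← germHom_eq_zero_iff, hH, RingHom.comp_apply, RingHom.mem_ker.1 this, map_zero]
    filter_upwards [hG0] with N hN
    rw [← hG]
    exact Ideal.span_le.2 hN
  obtain ⟨N₀, hN₀⟩ := hker.exists
  let h (N) : S →+* k :=
    if hN : _ ≤ _ then RingHom.liftOfSurjective (q : MvPolynomial (Fin n) ℤ →+* S) hq ⟨H N, hN⟩
    else RingHom.liftOfSurjective (q : MvPolynomial (Fin n) ℤ →+* S) hq ⟨H N₀, hN₀⟩
  refine ⟨h, RingHom.ext fun s => ?_⟩
  obtain ⟨g, rfl⟩ := hq s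
  have hg : f (q g) = germHom l H g := (RingHom.congr_fun hH g).symm
  rw [hg]
  refine Germ.coe_eq.2 (hker.mono fun N hN => ?_)
  simp only [h, RingHom.pi_apply, dif_pos hN]
  exact RingHom.liftOfRightInverse_comp_apply _ _ _ ⟨H N, hN⟩ g

variable (l) (p : ℕ) [Fact p.Prime] [CharP k p]

/-- The nonstandard Frobenius endomorphism `x ↦ x ^ p ^ κ` attached to a family `κ` of
exponents. -/
def germFrobenius (κ : ι → ℕ) : l.Germ k →+* l.Germ k where
  toFun := Germ.map' (fun x N => x N ^ p ^ κ N) fun _ _ h => h.mono fun _ hN => by simp only [hN]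
  map_one' := congrArg (Germ.ofFun (l := l)) (funext fun _ => one_pow _)
  map_zero' := congrArg (Germ.ofFun (l := l)) (funext fun _ =>
    zero_pow (pow_ne_zero _ (Fact.out : p.Prime).ne_zero))
  map_mul' x y := Germ.inductionOn₂ x y fun _ _ =>
    congrArg (Germ.ofFun (l := l)) (funext fun _ => mul_pow _ _ _)
  map_add' x y := Germ.inductionOn₂ x y fun _ _ =>
    congrArg (Germ.ofFun (l := l)) (funext fun _ => _root_.add_pow_char_pow ..)

variable {l}

lemma germFrobenius_coe (κ : ι → ℕ) (x : ι → k) :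
    germFrobenius l p κ (x : l.Germ k) = ((fun N => x N ^ p ^ κ N : ι → k) : l.Germ k) := rfl

end Germs

instance {ι k : Type*} [Field k] [IsAlgClosed k] {W : Ultrafilter ι} :
    IsAlgClosed ((W : Filter ι).Germ k) := by
  refine .of_exists_root _ fun P hP hirr => ?_
  have hlift : P ∈ lifts (Germ.coeRingHom (W : Filter ι) (R := k)) :=
    (lifts_iff_coeff_lifts P).2 fun n => Quotient.exists_rep (P.coeff n)
  obtain ⟨Q, rfl, hQdeg, hQ⟩ := lifts_and_natDegree_eq_and_monic hlift hP
  have hroot (N) : ∃ x, (Q.map (Pi.evalRingHom (fun _ => k) N)).eval x = 0 := by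
    refine IsAlgClosed.exists_root _ (degree_ne_of_natDegree_ne ?_)
    rw [hQ.natDegree_map, hQdeg]
    exact hirr.natDegree_pos.ne'
  choose x hx using hroot
  refine ⟨Germ.coeRingHom (W : Filter ι) x, ?_⟩
  have hQx : Q.eval x = 0 := funext fun N =>
    (eval_map_apply (Pi.evalRingHom (fun _ => k) N) x).symm.trans (hx N)
  rw [eval_map_apply, hQx, map_zero]

section Bivariate

variable {R S : Type*} [CommRing R] [CommRing S]

lemma mem_lifts_mapRingHom_iff {φ : R →+* S} {f : S[X][X]} :
    f ∈ lifts (mapRingHom φ) ↔ ∀ i j, (f.coeff i).coeff j ∈ Set.range φ := by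
  rw [lifts_iff_coeff_lifts]
  exact forall_congr' fun i => (lifts_iff_set_range (f := φ) (f.coeff i)).symm.trans
    (lifts_iff_coeff_lifts _)

lemma exists_natDegree_coeff_le (f : R[X][X]) : ∃ e, ∀ i, (f.coeff i).natDegree ≤ e := by
  refine ⟨f.support.sup fun i => (f.coeff i).natDegree, fun i => ?_⟩
  by_cases hi : i ∈ f.support
  · exact Finset.le_sup (f := fun i => (f.coeff i).natDegree) hi
  · simp [notMem_support_iff.1 hi]

lemma coeff_coeff_swap (f : R[X][X]) (i j : ℕ) :
    ((Bivariate.swap f).coeff i).coeff j = (f.coeff j).coeff i := by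
  induction f using Polynomial.induction_on' with
  | add f g hf hg => simp [hf, hg]
  | monomial n a =>
    induction a using Polynomial.induction_on' with
    | add a b ha hb => rw [map_add, map_add, coeff_add, coeff_add, ha, hb, coeff_add, coeff_add]
    | monomial m a =>
      rw [Bivariate.swap_monomial_monomial]
      simp only [coeff_monomial]
      split_ifs <;> simp_all [coeff_monomial]

lemma natDegree_swap_le_iff {f : R[X][X]} {e : ℕ} :
    (Bivariate.swap f).natDegree ≤ e ↔ ∀ i, (f.coeff i).natDegree ≤ e := by
  simp only [natDegree_le_iff_coeff_eq_zero, Polynomial.ext_iff (p := coeff _ _), coeff_coeff_swap,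
    coeff_zero]
  exact ⟨fun h i j hj => h j hj i, fun h j hj i => h i j hj⟩

lemma natDegree_coeff_le_of_dvd [IsDomain R] {f g : R[X][X]} (hf : f ≠ 0) (hgf : g ∣ f) {e : ℕ}
    (he : ∀ i, (f.coeff i).natDegree ≤ e) (i : ℕ) : (g.coeff i).natDegree ≤ e :=
  natDegree_swap_le_iff.1 ((natDegree_le_of_dvd (_root_.map_dvd Bivariate.swap hgf)
    (by simpa using hf)).trans (natDegree_swap_le_iff.2 he)) i

end Bivariate

section Irreducibility

lemma exists_algHom_of_finiteType (A B : Type*) [Field A] [IsAlgClosed A] [CommRing B]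
    [Nontrivial B] [Algebra A B] [Algebra.FiniteType A B] : Nonempty (B →ₐ[A] A) := by
  obtain ⟨m, hm⟩ := Ideal.exists_maximal B
  let := Ideal.Quotient.field m
  have : Module.Finite A (B ⧸ m) := finite_of_finite_type_of_isJacobsonRing A (B ⧸ m)
  have hbij := IsAlgClosed.algebraMap_bijective_of_isIntegral (k := A) (K := B ⧸ m)
  exact ⟨((AlgEquiv.ofBijective (Algebra.ofId A (B ⧸ m)) hbij).symm : B ⧸ m →ₐ[A] A).comp
    (Ideal.Quotient.mkₐ A m)⟩

lemma irreducible_map_of_isAlgClosed {A T : Type*} [Field A] [IsAlgClosed A] [Field T] (φ : A →+* T)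
    {f : A[X][X]} (hf : f.Monic) (hirr : Irreducible f) : Irreducible (f.map (mapRingHom φ)) := by
  classical
  let := φ.toAlgebra
  have hfT := hf.map (mapRingHom φ)
  refine hfT.irreducible_iff_natDegree.2 ⟨fun h1 => hirr.ne_one ?_, fun g g' hg hg' hgg => ?_⟩
  · refine map_injective (mapRingHom φ) (map_injective φ φ.injective) ?_
    rw [h1, Polynomial.map_one]
  let s := (g.coeffs.biUnion Polynomial.coeffs) ∪ (g'.coeffs.biUnion Polynomial.coeffs)
  let B := Algebra.adjoin A (s : Set T)
  have : Algebra.FiniteType A B := ⟨(Subalgebra.fg_top _).2 ⟨s, rfl⟩⟩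
  have hlift {u : T[X][X]} (hu : u.coeffs.biUnion Polynomial.coeffs ⊆ s) :
      ∃ v : B[X][X], v.map (mapRingHom (algebraMap B T)) = u := by
    refine mem_lifts_mapRingHom_iff.2 fun i j => ?_
    by_cases h0 : (u.coeff i).coeff j = 0
    · exact ⟨0, by rw [h0, map_zero]⟩
    · refine ⟨⟨_, Algebra.subset_adjoin (hu (Finset.mem_biUnion.2
        ⟨_, coeff_mem_coeffs fun h => h0 ?_, coeff_mem_coeffs h0⟩))⟩, rfl⟩
      rw [h, coeff_zero]
  have hinj : Function.Injective (mapRingHom (algebraMap B T)) :=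
    map_injective _ Subtype.val_injective
  obtain ⟨G, hGg⟩ := hlift (u := g) Finset.subset_union_left
  obtain ⟨G', hGg'⟩ := hlift (u := g') Finset.subset_union_right
  have hG : G.Monic := hinj.monic_map_iff.2 (by rwa [hGg])
  have hG' : G'.Monic := hinj.monic_map_iff.2 (by rwa [hGg'])
  have hGG : G * G' = f.map (mapRingHom (algebraMap A B)) := by
    refine map_injective _ hinj ?_
    rw [Polynomial.map_mul, hGg, hGg', hgg, Polynomial.map_map,
      mapRingHom_comp]
    rfl
  obtain ⟨ψ⟩ := exists_algHom_of_finiteType A B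
  have hψ : (G.map (mapRingHom (ψ : B →+* A))) * (G'.map (mapRingHom (ψ : B →+* A))) = f := by
    rw [← Polynomial.map_mul, hGG, Polynomial.map_map, mapRingHom_comp, ψ.comp_algebraMap,
      Algebra.algebraMap_self, mapRingHom_id, Polynomial.map_id]
  have hdeg := (hf.irreducible_iff_natDegree.1 hirr).2 _ _ (hG.map _) (hG'.map _) hψ
  rwa [hG.natDegree_map, hG'.natDegree_map, ← hG.natDegree_map (mapRingHom (algebraMap B T)),
    ← hG'.natDegree_map (mapRingHom (algebraMap B T)), hGg, hGg'] at hdeg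

variable {ι k : Type*} [Field k] {l : Filter ι} {W : Ultrafilter ι}

lemma exists_monic_factors {f : k[X][X]} (hf : f.Monic) (h1 : f ≠ 1) (hirr : ¬ Irreducible f)
    {e : ℕ} (he : ∀ i, (f.coeff i).natDegree ≤ e) :
    ∃ g g' : k[X][X], g * g' = f ∧ ∀ u ∈ ({g, g'} : Set k[X][X]),
      u.Monic ∧ u.natDegree ∈ Set.Icc 1 f.natDegree ∧ ∀ i, (u.coeff i).natDegree ≤ e := by
  rw [hf.irreducible_iff_natDegree] at hirr
  push Not at hirr
  obtain ⟨g, g', hg, hg', rfl, h0, h0'⟩ := hirr h1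
  refine ⟨g, g', rfl, ?_⟩
  rintro u (rfl | rfl)
  · exact ⟨hg, ⟨Nat.pos_of_ne_zero h0, by rw [hg.natDegree_mul hg']; lia⟩,
      natDegree_coeff_le_of_dvd hf.ne_zero (dvd_mul_right ..) he⟩
  · exact ⟨hg', ⟨Nat.pos_of_ne_zero h0', by rw [hg.natDegree_mul hg']; lia⟩,
      natDegree_coeff_le_of_dvd hf.ne_zero (dvd_mul_left ..) he⟩

lemma exists_lift_of_bounded_degree {g : ι → k[X][X]} {a e : ℕ}
    (hg : ∀ᶠ N in l, (g N).natDegree ≤ a ∧ ∀ i, ((g N).coeff i).natDegree ≤ e) :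
    ∃ G : (ι → k)[X][X],
      ∀ᶠ N in l, G.map (mapRingHom (Pi.evalRingHom (fun _ => k) N)) = g N := by
  refine ⟨∑ i ∈ Finset.range (a + 1), ∑ j ∈ Finset.range (e + 1),
    monomial i (monomial j fun N => ((g N).coeff i).coeff j), hg.mono fun N ⟨ha, he⟩ => ?_⟩
  simp only [Polynomial.map_sum, map_monomial, coe_mapRingHom, Pi.evalRingHom_apply, ← map_sum]
  conv_rhs => rw [(g N).as_sum_range' (a + 1) (Nat.lt_succ_of_le ha)]
  exact Finset.sum_congr rfl fun i _ =>
    congrArg _ ((g N).coeff i |>.as_sum_range' (e + 1) (Nat.lt_succ_of_le (he i))).symm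

lemma map_germ_eq_map_germ {F G : (ι → k)[X][X]} {u : ι → k[X][X]}
    (hF : ∀ᶠ N in l, F.map (mapRingHom (Pi.evalRingHom (fun _ => k) N)) = u N)
    (hG : ∀ᶠ N in l, G.map (mapRingHom (Pi.evalRingHom (fun _ => k) N)) = u N) :
    F.map (mapRingHom (Germ.coeRingHom l)) = G.map (mapRingHom (Germ.coeRingHom l)) := by
  ext i j
  simp only [coeff_map, coe_mapRingHom]
  refine Germ.coe_eq.2 ?_
  filter_upwards [hF, hG] with N h h'
  have := congrArg (fun v => (v.coeff i).coeff j) (h.trans h'.symm)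
  simpa only [coeff_map, coe_mapRingHom, Pi.evalRingHom_apply] using this

lemma natDegree_map_germ_ne_zero {G : (ι → k)[X][X]} {a : ℕ} {g : ι → k[X][X]}
    (hG : ∀ᶠ N in W, G.map (mapRingHom (Pi.evalRingHom (fun _ => k) N)) = g N)
    (hg : ∀ᶠ N in W, (g N).Monic ∧ (g N).natDegree ∈ Set.Icc 1 a) :
    (G.map (mapRingHom (Germ.coeRingHom (W : Filter ι)))).natDegree ≠ 0 := by
  have : ∀ᶠ N in W, ∃ i ∈ Set.Icc 1 a, ((g N).coeff i).coeff 0 = 1 :=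
    hg.mono fun N hN => ⟨_, hN.2, by rw [hN.1.coeff_natDegree, coeff_one_zero]⟩
  obtain ⟨i, hi, hN⟩ := (Ultrafilter.eventually_exists_mem_iff (Set.finite_Icc 1 a)).1 this
  intro h0
  have hcoeff := congrArg (coeff · 0) (coeff_eq_zero_of_natDegree_lt (h0.trans_lt hi.1))
  simp only [coeff_map, coe_mapRingHom, coeff_zero] at hcoeff
  obtain ⟨N, h, hGN, h0⟩ := (hN.and (hG.and (Germ.coe_eq.1 hcoeff))).exists
  rw [← hGN, coeff_map, coe_mapRingHom, coeff_map, Pi.evalRingHom_apply, h0] at h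
  exact zero_ne_one h

lemma eventually_irreducible_of_germHom {R : Type*} [CommRing R] (h : ι → R →+* k) {f : R[X][X]}
    (hf : f.Monic) (hirr : Irreducible (f.map (mapRingHom (germHom W h)))) :
    ∀ᶠ N in W, Irreducible (f.map (mapRingHom (h N))) := by
  by_contra hcon
  rw [← Ultrafilter.eventually_not] at hcon
  have : Nontrivial R := (germHom (W : Filter ι) h).domain_nontrivial
  obtain ⟨e, he⟩ := exists_natDegree_coeff_le f
  have hne1 (N) : f.map (mapRingHom (h N)) ≠ 1 := fun h1 => by
    refine hirr.ne_one ?_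
    rw [hf.natDegree_eq_zero.1 (by rw [← hf.natDegree_map (mapRingHom (h N)), h1, natDegree_one]),
      Polynomial.map_one]
  have hcoeff (N i) : ((f.map (mapRingHom (h N))).coeff i).natDegree ≤ e := by
    rw [coeff_map]
    exact natDegree_map_le.trans (he i)
  choose! g g' hgg hg using fun N hN => exists_monic_factors (hf.map _) (hne1 N) hN (hcoeff N)
  simp only [hf.natDegree_map] at hg
  have hg' := hcon.mono fun N hN => hg N hN (g' N) (Or.inr rfl)
  replace hg := hcon.mono fun N hN => hg N hN (g N) (Or.inl rfl)
  obtain ⟨G, hG⟩ := exists_lift_of_bounded_degree (hg.mono fun N hN => ⟨hN.2.1.2, hN.2.2⟩)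
  obtain ⟨G', hG'⟩ := exists_lift_of_bounded_degree (hg'.mono fun N hN => ⟨hN.2.1.2, hN.2.2⟩)
  have hmul : f.map (mapRingHom (germHom (W : Filter ι) h)) =
      G.map (mapRingHom (Germ.coeRingHom (W : Filter ι))) *
        G'.map (mapRingHom (Germ.coeRingHom (W : Filter ι))) := by
    rw [← Polynomial.map_mul, germHom, ← mapRingHom_comp, ← Polynomial.map_map]
    refine map_germ_eq_map_germ (u := fun N => f.map (mapRingHom (h N))) (.of_forall fun N => ?_) ?_
    · rw [Polynomial.map_map, mapRingHom_comp]
      rfl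
    · filter_upwards [hcon, hG, hG'] with N hN hGN hGN'
      rw [Polynomial.map_mul, hGN, hGN', hgg N hN]
  rcases hirr.isUnit_or_isUnit hmul with hu | hu
  · exact natDegree_map_germ_ne_zero hG (hg.mono fun N hN => ⟨hN.1, hN.2.1⟩)
      (natDegree_eq_zero_of_isUnit hu)
  · exact natDegree_map_germ_ne_zero hG' (hg'.mono fun N hN => ⟨hN.1, hN.2.1⟩)
      (natDegree_eq_zero_of_isUnit hu)

lemma eventually_irreducible {A R : Type*} [CommRing R] [Field A] [IsAlgClosed A]
    {φ : A →+* (W : Filter ι).Germ k} {j : R →+* A} {h : ι → R →+* k}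
    (hh : germHom W h = φ.comp j) {f : R[X][X]} (hf : f.Monic)
    (hirr : Irreducible (f.map (mapRingHom j))) :
    ∀ᶠ N in W, Irreducible (f.map (mapRingHom (h N))) := by
  refine eventually_irreducible_of_germHom h hf ?_
  have := irreducible_map_of_isAlgClosed φ (hf.map _) hirr
  rwa [Polynomial.map_map, mapRingHom_comp, ← hh] at this

end Irreducibility

section PlaneCurve

variable {k : Type*} [Field k] {g : k[X][X]}

lemma apply_mk_eq_evalEval (P : AdjoinRoot g →ₐ[k] k) (u : k[X][X]) :
    P (AdjoinRoot.mk g u) =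
      u.evalEval (P (algebraMap k[X] (AdjoinRoot g) X)) (P (AdjoinRoot.root g)) := by
  rw [← coe_evalEvalRingHom]
  refine RingHom.congr_fun (f := (P : AdjoinRoot g →+* k).comp (AdjoinRoot.mk g)) ?_ u
  ext x
  · exact (P.commutes x).trans (by simp)
  · simp
  · simp

lemma X_sub_C_dvd_mk_sub_mk (a : k) (u : k[X][X]) :
    algebraMap k[X] (AdjoinRoot g) (X - C a) ∣
      AdjoinRoot.mk g u - AdjoinRoot.mk g ((u.map (evalRingHom a)).map C) := by
  rw [← map_sub, AdjoinRoot.algebraMap_eq, ← AdjoinRoot.mk_C]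
  refine _root_.map_dvd (AdjoinRoot.mk g) ((C_dvd_iff_dvd_coeff ..).2 fun i => ?_)
  simp only [coeff_sub, coeff_map, coe_evalRingHom]
  exact X_sub_C_dvd_sub_C_eval

lemma isUnramifiedAt_of_separable {P : AdjoinRoot g →ₐ[k] k}
    (hs : (g.map (evalRingHom (P (algebraMap k[X] (AdjoinRoot g) X)))).Separable) :
    IsUnramifiedAt P := by
  set a := P (algebraMap k[X] (AdjoinRoot g) X)
  set b := P (AdjoinRoot.root g)
  have hP (u : k[X][X]) : P (AdjoinRoot.mk g u) = (u.map (evalRingHom a)).eval b := by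
    rw [apply_mk_eq_evalEval, map_evalRingHom_eval]
  have hroot : (g.map (evalRingHom a)).eval b = 0 := by rw [← hP, AdjoinRoot.mk_self, map_zero]
  obtain ⟨e, he⟩ := dvd_iff_isRoot.2 hroot
  refine ⟨AdjoinRoot.mk g (e.map C), ?_, fun u hu => ?_⟩
  · have hCa : (evalRingHom a).comp C = .id k := by ext; simp
    have hderiv := hs.aeval_derivative_ne_zero (x := b) (by simpa using hroot)
    rw [hP, Polynomial.map_map, hCa, Polynomial.map_id]
    simpa [he] using hderiv
  obtain ⟨U, rfl⟩ := AdjoinRoot.mk_surjective u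
  obtain ⟨V, hV⟩ := dvd_iff_isRoot.2 ((hP U).symm.trans hu)
  have hswap : (U.map (evalRingHom a)) * e = g.map (evalRingHom a) * V := by
    rw [hV, he]
    ring
  have hU := X_sub_C_dvd_mk_sub_mk (g := g) a U
  have hg := X_sub_C_dvd_mk_sub_mk (g := g) a g
  rw [AdjoinRoot.mk_self, zero_sub, dvd_neg] at hg
  rw [← sub_add_cancel (AdjoinRoot.mk g U) (AdjoinRoot.mk g ((U.map (evalRingHom a)).map C)),
    add_mul, ← map_mul _ (Polynomial.map _ _) (Polynomial.map _ _), ← Polynomial.map_mul, hswap,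
    Polynomial.map_mul, map_mul]
  exact dvd_add (hU.mul_right _) (hg.mul_right _)

lemma exists_injective_points [IsAlgClosed k] (hg : g.Monic) {m : ℕ} (hm : g.natDegree = m) {a : k}
    (hs : (g.map (evalRingHom a)).Separable) :
    ∃ P : Fin m → (AdjoinRoot g →ₐ[k] k), P.Injective ∧
      ∀ i, P i (algebraMap k[X] (AdjoinRoot g) X) = a := by
  have hcard : Fintype.card ((g.map (evalRingHom a)).rootSet k) = m :=
    (card_rootSet_eq_natDegree hs (by simpa using IsAlgClosed.splits _)).trans
      ((hg.natDegree_map _).trans hm)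
  let r := (Fintype.equivFinOfCardEq hcard).symm
  have hr (i) : g.eval₂ (aeval a : k[X] →ₐ[k] k) (r i : k) = 0 := by
    have := (mem_rootSet.1 (r i).2).2
    rwa [aeval_def, Algebra.algebraMap_self, eval₂_id, eval_map] at this
  refine ⟨fun i => AdjoinRoot.liftAlgHom g (aeval a) (r i) (hr i), fun i j hij => ?_, fun i => ?_⟩
  · have := DFunLike.congr_fun hij (AdjoinRoot.root g)
    exact r.injective (Subtype.ext (by simpa using this))
  · rw [AdjoinRoot.algebraMap_eq]
    simp

end PlaneCurve

section Specialization

variable {k R : Type*} [Field k] [CommRing R]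

/-- The reduction of the coordinate ring of the plane curve `f` along a homomorphism `h` of the
coefficients. -/
noncomputable def specialize (f : R[X][X]) (h : R →+* k) :
    AdjoinRoot f →+* AdjoinRoot (f.map (mapRingHom h)) :=
  AdjoinRoot.map (mapRingHom h) f (f.map (mapRingHom h)) dvd_rfl

variable {f : R[X][X]}

lemma specialize_root (h : R →+* k) :
    specialize f h (AdjoinRoot.root f) = AdjoinRoot.root (f.map (mapRingHom h)) :=
  AdjoinRoot.map_root ..

lemma specialize_algebraMap (h : R →+* k) (u : R[X]) :
    specialize f h (algebraMap R[X] _ u) = algebraMap k[X] _ (u.map h) :=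
  AdjoinRoot.map_of ..

lemma powerBasisAux'_apply {f : R[X]} (hf : f.Monic) (i) :
    AdjoinRoot.powerBasisAux' hf i = AdjoinRoot.root f ^ (i : ℕ) :=
  congrFun (AdjoinRoot.powerBasis' hf).coe_basis i

/-- The power basis of the specialized curve, indexed by the power basis of the original one. -/
noncomputable def specializedBasis (hf : f.Monic) (h : R →+* k) :
    Basis (Fin f.natDegree) k[X] (AdjoinRoot (f.map (mapRingHom h))) :=
  (AdjoinRoot.powerBasisAux' (hf.map _)).reindex (finCongr (hf.natDegree_map _))

lemma specializedBasis_apply (hf : f.Monic) (h : R →+* k) (i) :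
    specializedBasis hf h i = specialize f h (AdjoinRoot.powerBasisAux' hf i) := by
  rw [specializedBasis, Basis.reindex_apply, powerBasisAux'_apply, powerBasisAux'_apply, map_pow,
    specialize_root]
  rfl

lemma specializedBasis_repr (hf : f.Monic) (h : R →+* k) (u : AdjoinRoot f) (i) :
    (specializedBasis hf h).repr (specialize f h u) i =
      ((AdjoinRoot.powerBasisAux' hf).repr u i).map h := by
  conv_lhs => rw [← (AdjoinRoot.powerBasisAux' hf).sum_repr u]
  simp only [Algebra.smul_def, map_sum, map_mul, specialize_algebraMap, ← specializedBasis_apply]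
  simp only [← Algebra.smul_def, map_smul, Basis.repr_self]
  simp [Finsupp.single_apply]

lemma exists_specialized_functional (hf : f.Monic) (h : R →+* k)
    (T : AdjoinRoot f →ₗ[R[X]] R[X]) :
    ∃ T' : AdjoinRoot (f.map (mapRingHom h)) →ₗ[k[X]] k[X],
      ∀ u, T' (specialize f h u) = (T u).map h := by
  refine ⟨(specializedBasis hf h).constr ℕ fun i => (T (AdjoinRoot.powerBasisAux' hf i)).map h,
    fun u => ?_⟩
  rw [Basis.constr_apply_fintype]
  conv_rhs => rw [← (AdjoinRoot.powerBasisAux' hf).sum_repr u]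
  simp only [Basis.equivFun_apply, specializedBasis_repr, map_sum, map_smul, smul_eq_mul,
    Polynomial.map_sum, Polynomial.map_mul]

lemma linearIndependent_specialize (hf : f.Monic) {κ : Type*} [Finite κ] [DecidableEq κ]
    {S : κ → AdjoinRoot f} {δ : R[X]}
    (hS : ∃ T : κ → (AdjoinRoot f →ₗ[R[X]] R[X]), ∀ i j, T i (S j) = if i = j then δ else 0)
    {h : R →+* k} (hδ : δ.map h ≠ 0) :
    LinearIndependent k[X] fun j => specialize f h (S j) := by
  cases nonempty_fintype κ
  obtain ⟨T, hT⟩ := hS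
  choose T' hT' using fun i => exists_specialized_functional hf h (T i)
  refine Fintype.linearIndependent_iff.2 fun a ha i => ?_
  have := congrArg (T' i) ha
  simp only [map_sum, map_smul, hT', hT, smul_eq_mul, map_zero, apply_ite (Polynomial.map h),
    Polynomial.map_zero, mul_ite, mul_zero, Finset.sum_ite_eq, Finset.mem_univ, if_true] at this
  exact (mul_eq_zero.1 this).resolve_right hδ

lemma exists_specialize_mem_coordDegreeLT (hf : f.Monic) {ι : Type*} [Finite ι]
    (u : ι → AdjoinRoot f) :
    ∃ c, ∀ (h : R →+* k) i, specialize f h (u i) ∈ coordDegreeLT (specializedBasis hf h) c := by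
  obtain ⟨c, hc⟩ := Finite.exists_le fun x : ι × Fin f.natDegree =>
    ((AdjoinRoot.powerBasisAux' hf).repr (u x.1) x.2).natDegree
  refine ⟨c + 1, fun h i => mem_coordDegreeLT.2 fun j => mem_degreeLT.2 ?_⟩
  rw [specializedBasis_repr]
  exact degree_le_natDegree.trans_lt
    (by exact_mod_cast Nat.lt_succ_of_le (natDegree_map_le.trans (hc (i, j))))

/-- The `k`-valued points of the curve `f` lying over the homomorphism `h` of the coefficients,
outside the zeros of `D`. -/
def curvePoints (f : R[X][X]) (h : R →+* k) (D : R[X]) : Set (AdjoinRoot f →+* k) :=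
  {P | P.comp (algebraMap R (AdjoinRoot f)) = h ∧ P (algebraMap R[X] (AdjoinRoot f) D) ≠ 0}

lemma apply_ne_zero_of_dvd {h : R →+* k} {D d : R[X]} {P : AdjoinRoot f →+* k}
    (hP : P ∈ curvePoints f h D) (hd : d ∣ D) : P (algebraMap R[X] _ d) ≠ 0 :=
  ne_zero_of_dvd_ne_zero hP.2 (_root_.map_dvd P (_root_.map_dvd _ hd))

lemma comp_specialize_mem_curvePoints {h : R →+* k} {D : R[X]}
    {P : AdjoinRoot (f.map (mapRingHom h)) →ₐ[k] k}
    (hD : (D.map h).eval (P (algebraMap k[X] _ X)) ≠ 0) :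
    (P : _ →+* k).comp (specialize f h) ∈ curvePoints f h D := by
  refine ⟨RingHom.ext fun a => ?_, ?_⟩
  · rw [RingHom.comp_apply, RingHom.comp_apply,
      show algebraMap R (AdjoinRoot f) a = algebraMap R[X] _ (C a) from rfl, specialize_algebraMap,
      map_C]
    exact P.commutes _
  · rwa [RingHom.comp_apply, specialize_algebraMap, RingHom.coe_coe, apply_algebraMap_eq_eval]

lemma separable_map_of_bezout {h : R →+* k} {D : R[X]}
    (hD : ∃ u v, u * f + v * derivative f = C D) {a : k} (ha : (D.map h).eval a ≠ 0) :
    ((f.map (mapRingHom h)).map (evalRingHom a)).Separable := by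
  obtain ⟨u, v, huv⟩ := hD
  rw [Polynomial.map_map]
  set ψ := (evalRingHom a).comp (mapRingHom h)
  have hψ : ψ D ≠ 0 := ha
  have := congrArg (Polynomial.map ψ) huv
  rw [Polynomial.map_add, Polynomial.map_mul, Polynomial.map_mul, map_C] at this
  refine ⟨C (ψ D)⁻¹ * u.map ψ, C (ψ D)⁻¹ * v.map ψ, ?_⟩
  rw [derivative_map, mul_assoc, mul_assoc, ← mul_add, this, ← C_mul, inv_mul_cancel₀ hψ, C_1]

theorem exists_curvePoint_of_branches [IsAlgClosed k] (p : ℕ) [Fact p.Prime] [CharP k p]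
    (hf : f.Monic) {β κ : Type*} [Fintype β] [Fintype κ] [DecidableEq κ]
    (hβ : Fintype.card β ≤ Fintype.card κ)
    {S : κ → AdjoinRoot f} (Z : β → κ → AdjoinRoot f) {d D δ : R[X]}
    (hD : ∃ u v, u * f + v * derivative f = C D) (hdD : d ∣ D) (hδD : δ ∣ D)
    (hS : ∃ T : κ → (AdjoinRoot f →ₗ[R[X]] R[X]), ∀ i j, T i (S j) = if i = j then δ else 0) :
    ∃ n₀, ∀ n ≥ n₀, ∀ h : R →+* k, Irreducible (f.map (mapRingHom h)) → D.map h ≠ 0 →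
      (∀ P ∈ curvePoints f h D, P (algebraMap R[X] _ X) ^ p ^ n = P (algebraMap R[X] _ X) →
        ∃ i, ∀ j, P (algebraMap R[X] _ d) * P (S j) ^ p ^ n = P (Z i j)) →
      ∀ i, ∃ P ∈ curvePoints f h D,
        P (algebraMap R[X] _ X) ^ p ^ n = P (algebraMap R[X] _ X) ∧
          ∀ j, P (algebraMap R[X] _ d) * P (S j) ^ p ^ n = P (Z i j) := by
  classical
  obtain ⟨c₁, hc₁⟩ := exists_specialize_mem_coordDegreeLT (k := k) hf
    fun x : Fin f.natDegree × Fin f.natDegree =>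
      AdjoinRoot.powerBasisAux' hf x.1 * AdjoinRoot.powerBasisAux' hf x.2
  obtain ⟨c₂, hc₂⟩ := exists_specialize_mem_coordDegreeLT (k := k) hf S
  obtain ⟨c₃, hc₃⟩ := exists_specialize_mem_coordDegreeLT (k := k) hf
    fun x : β × κ => Z x.1 x.2
  let c := c₁ + c₂ + c₃ + D.natDegree
  refine ⟨3 * (Fintype.card (Fin f.natDegree) * (4 * c + 3) +
    Fintype.card κ * Fintype.card κ * (3 * c + 3) + 1), fun n hn h hirr hD0 hE i => ?_⟩
  have : IsDomain (AdjoinRoot (f.map (mapRingHom h))) := AdjoinRoot.isDomain_of_prime hirr.prime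
  have hδ : δ.map h ≠ 0 := ne_zero_of_dvd_ne_zero hD0 (Polynomial.map_dvd h hδD)
  have hmono {c' : ℕ} (hc' : c' ≤ c) {u} (hu : u ∈ coordDegreeLT (specializedBasis hf h) c') :
      u ∈ coordDegreeLT (specializedBasis hf h) c := coordDegreeLT_mono hc' hu
  have hX (P : AdjoinRoot (f.map (mapRingHom h)) →ₐ[k] k) : ((P : _ →+* k).comp (specialize f h))
      (algebraMap R[X] _ X) = P (algebraMap k[X] _ X) := by
    rw [RingHom.comp_apply, specialize_algebraMap, map_X]
    rfl
  obtain ⟨P, ⟨hP, hPX, hPi⟩, -, -⟩ := exists_point_on_branch p hn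
    (b := specializedBasis hf h) (fun i j => by
      simpa only [map_mul, ← specializedBasis_apply] using hmono (by lia) (hc₁ h (i, j)))
    hβ (linearIndependent_specialize hf hS hδ) (fun j => hmono (by lia) (hc₂ h j))
    (Z := fun i j => specialize f h (Z i j)) (fun i j => hmono (by lia) (hc₃ h (i, j)))
    (d := specialize f h (algebraMap R[X] _ d)) hD0 (natDegree_map_le.trans (by lia))
    (fun a ha => exists_injective_points (hf.map _) (hf.natDegree_map _)
      (separable_map_of_bezout hD ha))
    (fun P hP => ⟨isUnramifiedAt_of_separable (separable_map_of_bezout hD hP),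
      apply_ne_zero_of_dvd (comp_specialize_mem_curvePoints hP) hdD⟩)
    (fun i => {P | (P : _ →+* k).comp (specialize f h) ∈ curvePoints f h D ∧
      P (algebraMap k[X] _ X) ^ p ^ n = P (algebraMap k[X] _ X) ∧
      ∀ j, P (specialize f h (algebraMap R[X] _ d)) * P (specialize f h (S j)) ^ p ^ n =
        P (specialize f h (Z i j))})
    (fun P hPD hPX => by
      have hP := comp_specialize_mem_curvePoints hPD
      obtain ⟨i, hi⟩ := hE _ hP (by rwa [hX])
      exact ⟨i, hP, hPX, hi⟩)
    (fun i P hP => hP.2.2) i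
  exact ⟨_, hP, by rwa [hX], hPi⟩

end Specialization

section GermPoints

variable {ι k R : Type*} [Field k] [CommRing R] {W : Ultrafilter ι} {f : R[X][X]}

lemma germHom_mem_curvePoints {h : ι → R →+* k} {D : R[X]} {P : ι → AdjoinRoot f →+* k}
    (hP : ∀ᶠ N in W, P N ∈ curvePoints f (h N) D) :
    germHom (W : Filter ι) P ∈ curvePoints f (germHom (W : Filter ι) h) D := by
  refine ⟨RingHom.ext fun a => Germ.coe_eq.2 <| hP.mono fun N hN => RingHom.congr_fun hN.1 a, ?_⟩
  rw [Ne, germHom_eq_zero_iff, ← Ultrafilter.eventually_not]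
  exact hP.mono fun N hN => hN.2

lemma eventually_map_ne_zero {h : ι → R →+* k} {D : R[X]} (hD : D.map (germHom W h) ≠ 0) :
    ∀ᶠ N in W, D.map (h N) ≠ 0 := by
  rw [Ultrafilter.eventually_not]
  refine fun h0 => hD (ext fun i => ?_)
  rw [coeff_map, coeff_zero, germHom_eq_zero_iff]
  exact h0.mono fun N hN => by rw [← coeff_map, hN, coeff_zero]

theorem exists_germ_curvePoint_of_branches [IsAlgClosed k] (p : ℕ) [Fact p.Prime] [CharP k p]
    {n : ι → ℕ} (hn : Tendsto n W atTop) (hf : f.Monic)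
    {β κ : Type*} [Fintype β] [Fintype κ] [DecidableEq κ]
    (hβ : Fintype.card β ≤ Fintype.card κ) {S : κ → AdjoinRoot f} (Z : β → κ → AdjoinRoot f)
    {d D δ : R[X]} (hD : ∃ u v, u * f + v * derivative f = C D) (hdD : d ∣ D) (hδD : δ ∣ D)
    (hS : ∃ T : κ → (AdjoinRoot f →ₗ[R[X]] R[X]), ∀ i j, T i (S j) = if i = j then δ else 0)
    {h : ι → R →+* k} (hirr : ∀ᶠ N in W, Irreducible (f.map (mapRingHom (h N))))
    (hD0 : D.map (germHom W h) ≠ 0)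
    (hcover : ∀ P ∈ curvePoints f (germHom W h) D,
      germFrobenius W p n (P (algebraMap R[X] _ X)) = P (algebraMap R[X] _ X) →
        ∃ i, ∀ j, P (algebraMap R[X] _ d) * germFrobenius W p n (P (S j)) = P (Z i j)) (i : β) :
    ∃ P ∈ curvePoints f (germHom W h) D,
      germFrobenius W p n (P (algebraMap R[X] _ X)) = P (algebraMap R[X] _ X) ∧
        ∀ j, P (algebraMap R[X] _ d) * germFrobenius W p n (P (S j)) = P (Z i j) := by
  obtain ⟨n₀, hn₀⟩ := exists_curvePoint_of_branches (k := k) p hf hβ Z hD hdD hδD hS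
  have hcov : ∀ᶠ N in W, ∀ P ∈ curvePoints f (h N) D,
      P (algebraMap R[X] _ X) ^ p ^ n N = P (algebraMap R[X] _ X) →
        ∃ i, ∀ j, P (algebraMap R[X] _ d) * P (S j) ^ p ^ n N = P (Z i j) := by
    by_contra hbad
    rw [← Ultrafilter.eventually_not] at hbad
    push Not at hbad
    obtain ⟨P, hP⟩ := hbad.choice
    obtain ⟨i, hi⟩ := hcover (germHom W P) (germHom_mem_curvePoints (hP.mono fun N hN => hN.1))
      (Germ.coe_eq.2 <| hP.mono fun N hN => hN.2.1)
    obtain ⟨N, hN, hN'⟩ := (hP.and <| eventually_all.2 fun j => Germ.coe_eq.1 (hi j)).exists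
    obtain ⟨j, hj⟩ := hN.2.2 i
    exact hj (hN' j)
  obtain ⟨P, hP⟩ := Eventually.choice <| ((hcov.and hirr).and
    ((eventually_map_ne_zero hD0).and (hn.eventually_ge_atTop n₀))).mono
      fun N hN => hn₀ (n N) hN.2.2 (h N) hN.1.2 hN.2.1 hN.1.1 i
  exact ⟨germHom W P, germHom_mem_curvePoints (hP.mono fun N hN => hN.1),
    Germ.coe_eq.2 <| hP.mono fun N hN => hN.2.1,
    fun j => Germ.coe_eq.2 <| hP.mono fun N hN => hN.2.2 j⟩

end GermPoints

section FractionField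

variable {R F : Type*} [CommRing R] [Field F] [Algebra R F] [IsFractionRing R F]

lemma exists_map_eq_C_mul [IsDomain R] (P : F[X]) :
    ∃ c : R, c ≠ 0 ∧ ∃ u : R[X], u.map (algebraMap R F) = C (algebraMap R F c) * P := by
  obtain ⟨b, hb, hbP⟩ := IsLocalization.integerNormalization_spec (nonZeroDivisors R) P
  refine ⟨b, nonZeroDivisors.ne_zero hb,
    IsLocalization.integerNormalization (nonZeroDivisors R) P, ?_⟩
  rw [hbP, ← smul_eq_C_mul, algebraMap_smul]

lemma exists_mul_add_mul_derivative_eq_C [IsDomain R] {K : Type*} [Field K] {φ : R →+* K}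
    (hφ : Function.Injective φ) {g : R[X]} (hg : (g.map φ).Separable) :
    ∃ c : R, c ≠ 0 ∧ ∃ u v : R[X], u * g + v * derivative g = C c := by
  let F := FractionRing R
  have hφF : (IsFractionRing.lift hφ : F →+* K).comp (algebraMap R F) = φ :=
    RingHom.ext fun r => IsFractionRing.lift_algebraMap hφ r
  rw [← hφF, ← Polynomial.map_map, separable_map] at hg
  obtain ⟨a, b, hab⟩ := hg
  obtain ⟨c₁, hc₁, u, hu⟩ := exists_map_eq_C_mul (R := R) a
  obtain ⟨c₂, hc₂, v, hv⟩ := exists_map_eq_C_mul (R := R) b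
  refine ⟨c₁ * c₂, mul_ne_zero hc₁ hc₂, C c₂ * u, C c₁ * v, ?_⟩
  apply map_injective _ (IsFractionRing.injective R F)
  simp only [Polynomial.map_add, Polynomial.map_mul, map_C, hu, hv, ← derivative_map, map_mul]
  linear_combination C (algebraMap R F c₁) * C (algebraMap R F c₂) * hab

lemma exists_dual_functionals [IsDomain R] {M κ : Type*} [AddCommGroup M] [Module R M]
    [Module.Free R M] [Module.Finite R M] [Finite κ] [DecidableEq κ] {S : κ → M}
    (hS : LinearIndependent R S) :
    ∃ δ : R, δ ≠ 0 ∧ ∃ T : κ → M →ₗ[R] R, ∀ i j, T i (S j) = if i = j then δ else 0 := by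
  have := Fintype.ofFinite κ
  let b := Module.Free.chooseBasis R M
  let ι := Module.Free.ChooseBasisIndex R M
  let F := FractionRing R
  let coord : M →ₗ[R] ι → F := (Algebra.linearMap R F).compLeft ι ∘ₗ b.equivFun.toLinearMap
  have hcoord : Function.Injective coord := fun x y hxy =>
    b.equivFun.injective <| funext fun i =>
      IsFractionRing.injective R F <| congrFun hxy i
  have hli : LinearIndependent F (coord ∘ S) :=
    (LinearIndependent.iff_fractionRing R F).1 (hS.map' coord (LinearMap.ker_eq_bot.2 hcoord))
  obtain ⟨g, hg⟩ := (Fintype.linearCombination F (coord ∘ S)).exists_leftInverse_of_injective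
    (LinearMap.ker_eq_bot.2 hli.fintypeLinearCombination_injective)
  have hgS (j : κ) : g (coord (S j)) = Pi.single j 1 := by
    simpa using LinearMap.congr_fun hg (Pi.single j 1)
  obtain ⟨δ, hδ⟩ := IsLocalization.exist_integer_multiples_of_finite (nonZeroDivisors R)
    fun x : ι × κ => g (Pi.single x.1 1) x.2
  choose t ht using hδ
  let T (i : κ) : M →ₗ[R] R := b.constr R fun l => t (l, i)
  have hT (i : κ) : Algebra.linearMap R F ∘ₗ T i =
      (δ : R) • ((LinearMap.proj (R := F) (φ := fun _ : κ => F) i).restrictScalars R ∘ₗ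
        g.restrictScalars R ∘ₗ coord) := by
    refine b.ext fun l => ?_
    have hl : coord (b l) = Pi.single l 1 := by
      ext m
      simp [coord, Finsupp.single_apply, Pi.single_apply, eq_comm, apply_ite (algebraMap R F)]
    simp [T, ht, hl, b.constr_basis]
  refine ⟨δ, nonZeroDivisors.coe_ne_zero δ, T, fun i j => IsFractionRing.injective R F ?_⟩
  have hij := LinearMap.congr_fun (hT i) (S j)
  simp only [LinearMap.comp_apply, Algebra.linearMap_apply, LinearMap.smul_apply,
    LinearMap.restrictScalars_apply, hgS, LinearMap.proj_apply, Pi.single_apply] at hij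
  rw [hij]
  split_ifs <;> simp [Algebra.smul_def]

end FractionField

section Extension

variable {R F B : Type*} [CommRing R] [Field F] [Algebra R F] [IsFractionRing R F]
  [Field B] [Algebra F B] [Algebra R B] [IsScalarTower R F B]

open IntermediateField in
lemma exists_aeval_eq_mul_of_mem_adjoin [IsDomain R] {w : B} (hw : IsIntegral F w) {s : Set B}
    (hs : s.Finite) (hsw : ∀ x ∈ s, x ∈ F⟮w⟯) :
    ∃ d : R, d ≠ 0 ∧ ∀ x ∈ s, ∃ u : R[X], aeval w u = algebraMap R B d * x := by
  have single (x : s) : ∃ c : R, c ≠ 0 ∧ ∃ u : R[X], aeval w u = algebraMap R B c * x := by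
    have hx := hsw x x.2
    rw [← mem_toSubalgebra, adjoin_simple_toSubalgebra_of_isAlgebraic hw.isAlgebraic,
      Algebra.adjoin_singleton_eq_range_aeval] at hx
    obtain ⟨P, hP⟩ := hx
    obtain ⟨c, hc, u, hu⟩ := exists_map_eq_C_mul (R := R) P
    refine ⟨c, hc, u, ?_⟩
    rw [← aeval_map_algebraMap F, hu, map_mul, aeval_C, ← IsScalarTower.algebraMap_apply, ← hP]
    rfl
  have := hs.fintype
  classical
  choose c hc u hu using single
  refine ⟨∏ x, c x, Finset.prod_ne_zero_iff.2 fun x _ => hc x, fun x hx => ?_⟩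
  refine ⟨C (∏ y ∈ Finset.univ.erase ⟨x, hx⟩, c y) * u ⟨x, hx⟩, ?_⟩
  rw [map_mul, aeval_C, hu, ← mul_assoc, ← map_mul, Finset.prod_erase_mul _ _ (Finset.mem_univ _)]

open IntermediateField in
lemma exists_isIntegral_forall_mem_adjoin [IsDomain R] [Infinite F] {s : Set B} (hs : s.Finite)
    (hsep : ∀ x ∈ s, IsSeparable F x) :
    ∃ y : B, IsIntegral R y ∧ IsSeparable F y ∧ ∀ x ∈ s, x ∈ F⟮y⟯ := by
  have hadj : Algebra.IsSeparable F (adjoin F s) :=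
    (isSeparable_adjoin_iff_isSeparable F B).2 hsep
  have := hs.to_subtype
  have : FiniteDimensional F (adjoin F s) :=
    finiteDimensional_adjoin fun x hx => (hsep x hx).isIntegral
  obtain ⟨y₀, hy₀⟩ := Field.exists_primitive_element F (adjoin F s)
  have hy₀s : F⟮(y₀ : B)⟯ = adjoin F s := by
    simpa [lift_adjoin_simple] using congr_arg lift hy₀
  have hy₀sep : IsSeparable F (y₀ : B) :=
    isSeparable_of_mem_isSeparable F B y₀.2
  obtain ⟨c, hc, hcy⟩ := ((IsFractionRing.isAlgebraic_iff R F B).2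
    hy₀sep.isIntegral.isAlgebraic).exists_integral_multiple
  have hc' : algebraMap R F c ≠ 0 := (map_ne_zero_iff _ (IsFractionRing.injective R F)).2 hc
  have hcy₀ : c • (y₀ : B) = algebraMap R F c • (y₀ : B) := (algebraMap_smul F c _).symm
  refine ⟨c • (y₀ : B), hcy, ?_, fun x hx => ?_⟩
  · rw [hcy₀, Algebra.smul_def]
    exact Field.isSeparable_mul (isSeparable_algebraMap _) hy₀sep
  · have hy₀mem : (y₀ : B) ∈ F⟮c • (y₀ : B)⟯ := by
      rw [hcy₀, ← inv_smul_smul₀ hc' (y₀ : B), smul_inv_smul₀ hc']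
      exact smul_mem _ (mem_adjoin_simple_self F _)
    have hle : F⟮(y₀ : B)⟯ ≤ F⟮c • (y₀ : B)⟯ := adjoin_simple_le_iff.2 hy₀mem
    exact hle (hy₀s.ge (subset_adjoin F s hx))

lemma isSeparable_of_aeval_map_eq_zero {τ : R →+* R} (hτ : Function.Injective τ) {g : R[X]}
    (hg : (g.map (algebraMap R F)).Separable) {z : B} (hz : aeval z (g.map τ) = 0) :
    IsSeparable F z := by
  have hinj : Function.Injective ((algebraMap R F).comp τ) :=
    (IsFractionRing.injective R F).comp hτ
  let τF : F →+* F := IsFractionRing.lift hinj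
  have hτF : τF.comp (algebraMap R F) = (algebraMap R F).comp τ :=
    RingHom.ext fun r => IsFractionRing.lift_algebraMap hinj r
  refine (hg.map (f := τF)).of_dvd (minpoly.dvd F z ?_)
  rwa [Polynomial.map_map, hτF, ← Polynomial.map_map, aeval_map_algebraMap]

open IntermediateField in
lemma exists_primitive_elements [IsDomain R] [IsIntegrallyClosed R] [Infinite F] {τ : R →+* R}
    (hτ : Function.Injective τ) {T : Set B} (hT : T.Finite) (hsep : ∀ t ∈ T, IsSeparable F t) :
    ∃ y w : B, IsIntegral R y ∧ IsIntegral R w ∧ IsSeparable F w ∧ (∀ t ∈ T, t ∈ F⟮y⟯) ∧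
      ∀ z, z = y ∨ aeval z ((minpoly R y).map τ) = 0 → z ∈ F⟮w⟯ := by
  obtain ⟨y, hy, hysep, hyT⟩ := exists_isIntegral_forall_mem_adjoin (R := R) hT hsep
  have hgsep : ((minpoly R y).map (algebraMap R F)).Separable := by
    rwa [← minpoly.isIntegrallyClosed_eq_field_fractions F B hy]
  have hg : (minpoly R y).map τ ≠ 0 := ((minpoly.monic hy).map τ).ne_zero
  have := FaithfulSMul.trans R F B
  have hfin : {z : B | z = y ∨ aeval z ((minpoly R y).map τ) = 0}.Finite := by
    refine (Set.finite_singleton y).union ?_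
    refine ((((minpoly R y).map τ).rootSet_finite B)).subset fun z hz => ?_
    exact mem_rootSet.2 ⟨hg, hz⟩
  obtain ⟨w, hw, hwsep, hwz⟩ := exists_isIntegral_forall_mem_adjoin (R := R) (F := F) hfin
    (by
      rintro z (rfl | hz)
      · exact hysep
      · exact isSeparable_of_aeval_map_eq_zero hτ hgsep hz)
  exact ⟨y, w, hy, hw, hwsep, hyT, hwz⟩

end Extension

lemma exists_isLocalHom_extension {C : Type u} {B K : Type*} [CommRing C] [Field B] [Field K]
    {i : C →+* B} (hi : Function.Injective i) (P : C →+* K) :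
    ∃ (L : Type u) (_ : CommRing L) (ι : C →+* L) (iL : L →+* B) (e : L →+* K),
      Function.Injective iL ∧ IsLocalHom e ∧ iL.comp ι = i ∧ e.comp ι = P := by
  have hprime : (RingHom.ker P).IsPrime := RingHom.ker_isPrime P
  have hiv (v : (RingHom.ker P).primeCompl) : IsUnit (i v) := by
    refine isUnit_iff_ne_zero.2 fun hv => v.2 ?_
    rw [(map_eq_zero_iff i hi).1 hv]
    exact zero_mem _
  have hPv (v : (RingHom.ker P).primeCompl) : IsUnit (P v) := isUnit_iff_ne_zero.2 v.2
  let L := Localization.AtPrime (RingHom.ker P)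
  refine ⟨L, inferInstance, algebraMap C L, IsLocalization.lift hiv, IsLocalization.lift hPv,
    ?_, ⟨fun l hl => ?_⟩, IsLocalization.lift_comp hiv, IsLocalization.lift_comp hPv⟩
  · refine (IsLocalization.lift_injective_iff hiv).2 fun x y => ⟨fun h => ?_, fun h => by rw [hi h]⟩
    simpa using congr_arg (IsLocalization.lift hiv) h
  · obtain ⟨c, v, rfl⟩ := IsLocalization.exists_mk'_eq (RingHom.ker P).primeCompl l
    refine (IsLocalization.AtPrime.isUnit_mk'_iff L _ c v).2 fun hc => hl.ne_zero ?_
    rw [IsLocalization.lift_mk', (RingHom.mem_ker).1 hc, zero_mul]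

section Equivariant

variable {L B K : Type*} [CommRing L] [CommRing B] [CommRing K]

/-- For a ring `L` with maps `i : L → B` and `e : L → K` to rings with endomorphisms `τ` and `φ`:
the pairs `(l, m)` for which `m` plays the role of `τ l` in `B` and of `φ l` in `K`. -/
def equivariantPairs (i : L →+* B) (e : L →+* K) (τ : B →+* B) (φ : K →+* K) : Subring (L × L) :=
  (i.comp (RingHom.snd L L)).eqLocus ((τ.comp i).comp (RingHom.fst L L)) ⊓
    (e.comp (RingHom.snd L L)).eqLocus ((φ.comp e).comp (RingHom.fst L L))

/-- The elements of `B` on which the partial homomorphism from `B` to `K` given by `i : L → B` and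
`e : L → K` commutes with the endomorphisms `τ` of `B` and `φ` of `K`. -/
def equivariantSubring (i : L →+* B) (e : L →+* K) (τ : B →+* B) (φ : K →+* K) : Subring B :=
  (equivariantPairs i e τ φ).map (i.comp (RingHom.fst L L))

variable {i : L →+* B} {e : L →+* K} {τ : B →+* B} {φ : K →+* K}

lemma mem_equivariantSubring {x : B} :
    x ∈ equivariantSubring i e τ φ ↔ ∃ l m, i l = x ∧ i m = τ x ∧ e m = φ (e l) := by
  constructor
  · rintro ⟨⟨l, m⟩, ⟨hi, he⟩, rfl⟩
    exact ⟨l, m, rfl, hi, he⟩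
  · rintro ⟨l, m, rfl, hi, he⟩
    exact ⟨(l, m), ⟨hi, he⟩, rfl⟩

lemma apply_mem_equivariantSubring (hi : Function.Injective i) {l m : L}
    (h : i l ∈ equivariantSubring i e τ φ) (hm : i m = τ (i l)) : e m = φ (e l) := by
  obtain ⟨l', m', hl', hm', he⟩ := mem_equivariantSubring.1 h
  rwa [← hi hl', hi (hm.trans hm'.symm)]

/-- The roots of the twisted polynomial are the candidates for the Frobenius image of a point. -/
lemma exists_root_apply_eq [IsDomain K] (hi : Function.Injective i) {g : B[X]}
    (hg : ∀ n, g.coeff n ∈ equivariantSubring i e τ φ) {s : Multiset B}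
    (hs : g.map τ = (s.map fun z => X - C z).prod) (hsL : ∀ z ∈ s, z ∈ Set.range i) {l : L}
    (hl : g.eval (i l) = 0) : ∃ m, i m ∈ s ∧ e m = φ (e l) := by
  obtain ⟨s, rfl⟩ : ∃ s' : Multiset L, s'.map i = s := by
    choose! f hf using hsL
    exact ⟨s.map f, by simp [Multiset.map_congr rfl hf]⟩
  let E := equivariantPairs i e τ φ
  let fst : E →+* L := (RingHom.fst L L).comp E.subtype
  let snd : E →+* L := (RingHom.snd L L).comp E.subtype
  have hisnd : i.comp snd = (τ.comp i).comp fst := RingHom.ext fun x => x.2.1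
  have hesnd : e.comp snd = (φ.comp e).comp fst := RingHom.ext fun x => x.2.2
  obtain ⟨G, hG⟩ : ∃ G : E[X], G.map (i.comp fst) = g := by
    refine (mem_lifts g).1 ((lifts_iff_coeff_lifts g).2 fun n => ?_)
    obtain ⟨x, hx, hxn⟩ := hg n
    exact ⟨⟨x, hx⟩, hxn⟩
  have hroot : (G.map fst).eval l = 0 := by
    apply hi
    rw [map_zero, ← eval_map_apply, Polynomial.map_map, hG, hl]
  have hprod : G.map snd = (s.map fun m => X - C m).prod := by
    apply map_injective i hi
    rw [Polynomial.map_map, hisnd, RingHom.comp_assoc, ← Polynomial.map_map, hG, hs,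
      Polynomial.map_multiset_prod, Multiset.map_map, Multiset.map_map]
    simp
  have hzero : (s.map fun m => φ (e l) - e m).prod = 0 := by
    calc (s.map fun m => φ (e l) - e m).prod = ((G.map snd).map e).eval (φ (e l)) := by
          rw [hprod, Polynomial.map_multiset_prod, eval_multiset_prod, Multiset.map_map,
            Multiset.map_map]
          simp
      _ = φ (e ((G.map fst).eval l)) := by
          rw [← eval_map_apply, ← eval_map_apply, Polynomial.map_map, hesnd, Polynomial.map_map,
            Polynomial.map_map, RingHom.comp_assoc]
      _ = 0 := by rw [hroot, map_zero, map_zero]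
  obtain ⟨m, hm, h0⟩ := Multiset.mem_map.1 (Multiset.prod_eq_zero_iff.1 hzero)
  exact ⟨m, Multiset.mem_map_of_mem i hm, (sub_eq_zero.1 h0).symm⟩

end Equivariant

lemma mem_equivariantSubring_of_mul {L B K : Type*} [CommRing L] [Field B] [Field K]
    {i : L →+* B} (hi : Function.Injective i) {e : L →+* K} [IsLocalHom e] {τ : B →+* B}
    {φ : K →+* K} {l : L} {x : B} (hl : i l ∈ equivariantSubring i e τ φ) (hne : e l ≠ 0)
    (hx : i l * x ∈ equivariantSubring i e τ φ) : x ∈ equivariantSubring i e τ φ := by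
  obtain ⟨u, u', hu, hu', heu⟩ := mem_equivariantSubring.1 hl
  obtain rfl := hi hu
  obtain ⟨m, m', hm, hm', hem⟩ := mem_equivariantSubring.1 hx
  have hne' : e u' ≠ 0 := by rwa [heu, Ne, map_eq_zero]
  obtain ⟨v, hv⟩ := (isUnit_of_map_unit e u hne.isUnit).exists_left_inv
  obtain ⟨v', hv'⟩ := (isUnit_of_map_unit e u' hne'.isUnit).exists_left_inv
  refine mem_equivariantSubring.2 ⟨v * m, v' * m', ?_, ?_, ?_⟩
  · rw [map_mul, hm, ← mul_assoc, ← map_mul, hv, map_one, one_mul]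
  · rw [map_mul, hm', map_mul, ← hu', ← mul_assoc, ← map_mul, hv', map_one, one_mul]
  · apply mul_left_cancel₀ hne'
    calc e u' * e (v' * m') = φ (e m) := by
          rw [← map_mul, ← mul_assoc, mul_comm u', hv', one_mul, hem]
      _ = e u' * φ (e (v * m)) := by
          rw [heu, ← map_mul, ← map_mul, ← mul_assoc, mul_comm u, hv, one_mul]

section Branch

variable {L B K : Type*} [CommRing L] [Field B] [Field K] {i : L →+* B} {e : L →+* K}
  [IsLocalHom e] {τ : B →+* B} {φ : K →+* K} {D D' : L}

lemma exists_branch (hi : Function.Injective i) (hD : i D ∈ equivariantSubring i e τ φ)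
    (hD' : i D' = τ (i D)) (hne : e D ≠ 0) {g : B[X]}
    (hg : ∀ n, g.coeff n ∈ equivariantSubring i e τ φ) {s : Multiset B}
    (hs : g.map τ = (s.map fun z => X - C z).prod) {y : B} (hy : g.eval y = 0) {n : ℕ}
    (hn : 1 ≤ n) {S : ℕ → L} (hS : ∀ m ≤ n, i (S m) = i D * y ^ m) {Z : B → ℕ → L}
    (hZ : ∀ z ∈ s, ∀ m ≤ n, i (Z z m) = i D * z ^ m) :
    ∃ z ∈ s, ∀ m ≤ n, e D * φ (e (S m)) = e (D' * Z z m) := by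
  obtain ⟨v, hv⟩ := (isUnit_of_map_unit e D hne.isUnit).exists_left_inv
  have hdiv {l : L} {x : B} (hl : i l = i D * x) : i (v * l) = x := by
    rw [map_mul, hl, ← mul_assoc, ← map_mul, hv, map_one, one_mul]
  have hy₁ : i (v * S 1) = y := hdiv (by rw [hS 1 hn, pow_one])
  have hz₁ (z : B) (hz : z ∈ s) : i (v * Z z 1) = z := hdiv (by rw [hZ z hz 1 hn, pow_one])
  obtain ⟨m₀, hm₀, hem₀⟩ := exists_root_apply_eq (l := v * S 1) hi hg hs
    (fun z hz => ⟨_, hz₁ z hz⟩) (by rw [hy₁, hy])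
  refine ⟨i m₀, hm₀, fun m hm => ?_⟩
  have hSm : S m = D * (v * S 1) ^ m := hi (by rw [hS m hm, map_mul, map_pow, hy₁])
  have hZm : Z (i m₀) m = D * m₀ ^ m := hi (by rw [hZ _ hm₀ m hm, map_mul, map_pow])
  rw [hSm, hZm, map_mul e D', map_mul, map_mul, map_mul, map_pow e, map_pow e m₀, map_pow φ, hem₀,
    apply_mem_equivariantSubring hi hD hD']
  ring

lemma mem_equivariantSubring_of_branch (hi : Function.Injective i)
    (hD : i D ∈ equivariantSubring i e τ φ) (hD' : i D' = τ (i D)) (hne : e D ≠ 0) {x : B}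
    {l m : L} (hl : i l = i D * x) (hm : i m = i D * τ x) (h : e D * φ (e l) = e (D' * m)) :
    x ∈ equivariantSubring i e τ φ := by
  have heD' : e D' = φ (e D) := apply_mem_equivariantSubring hi hD hD'
  obtain ⟨v, hv⟩ := (isUnit_of_map_unit e D hne.isUnit).exists_left_inv
  refine mem_equivariantSubring.2 ⟨v * l, v * m, ?_, ?_, ?_⟩
  · rw [map_mul, hl, ← mul_assoc, ← map_mul, hv, map_one, one_mul]
  · rw [map_mul, hm, ← mul_assoc, ← map_mul, hv, map_one, one_mul]
  · apply mul_left_cancel₀ hne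
    apply mul_left_cancel₀ ((map_ne_zero φ).2 hne)
    have hev : e D * e v = 1 := by rw [← map_mul, mul_comm, hv, map_one]
    have hφ : φ (e D) * φ (e v) = 1 := by rw [← map_mul, hev, map_one]
    simp only [map_mul, heD'] at h ⊢
    linear_combination φ (e D) * e m * hev - h - e D * φ (e l) * hφ

end Branch

section Model

variable {R F B : Type*} [CommRing R] [Field F] [Algebra R F] [IsFractionRing R F]
  [Field B] [Algebra F B] [Algebra R B] [IsScalarTower R F B]

lemma exists_primitive_elements_aeval [IsDomain R] [IsIntegrallyClosed R] [Infinite F]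
    {τ : R →+* R} (hτ : Function.Injective τ) {T : Set B} (hT : T.Finite)
    (hsep : ∀ t ∈ T, IsSeparable F t) :
    ∃ y w : B, IsIntegral R y ∧ IsIntegral R w ∧ IsSeparable F w ∧
      (∃ c : R, c ≠ 0 ∧ ∀ t ∈ T, ∃ u : R[X], aeval y u = algebraMap R B c * t) ∧
      ∃ d : R, d ≠ 0 ∧ ∀ z, z = y ∨ aeval z ((minpoly R y).map τ) = 0 →
        ∀ m ≤ (minpoly R y).natDegree, ∃ u : R[X], aeval w u = algebraMap R B d * z ^ m := by
  obtain ⟨y, w, hy, hw, hwsep, hyT, hwz⟩ := exists_primitive_elements (F := F) hτ hT hsep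
  refine ⟨y, w, hy, hw, hwsep, exists_aeval_eq_mul_of_mem_adjoin (F := F) hy.tower_top hT hyT, ?_⟩
  have := FaithfulSMul.trans R F B
  let s : Set B := {z | z = y ∨ aeval z ((minpoly R y).map τ) = 0}
  have hs : s.Finite := by
    refine (Set.finite_singleton y).union ?_
    refine (((minpoly R y).map τ).rootSet_finite B).subset fun z hz => ?_
    exact mem_rootSet.2 ⟨((minpoly.monic hy).map τ).ne_zero, hz⟩
  obtain ⟨d, hd, hds⟩ := exists_aeval_eq_mul_of_mem_adjoin (R := R) (F := F) hw.tower_top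
    (hs.image2 (fun z m => z ^ m) (Set.finite_Iic (minpoly R y).natDegree))
    (by
      rintro _ ⟨z, hz, m, -, rfl⟩
      exact pow_mem (hwz z hz) m)
  exact ⟨d, hd, fun z hz m hm => hds _ (Set.mem_image2_of_mem hz hm)⟩

variable {R₀ : Type*} [CommRing R₀]

lemma exists_injective_adjoinRoot_hom [IsDomain R] [IsIntegrallyClosed R] [FaithfulSMul R B]
    {ρ : R₀ →+* R} (hρ : Function.Injective ρ) {w : B} (hw : IsIntegral R w) {f : R₀[X]}
    (hf : f.map ρ = minpoly R w) :
    ∃ i : AdjoinRoot f →+* B, Function.Injective i ∧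
      ∀ u, i (AdjoinRoot.mk f u) = aeval w (u.map ρ) := by
  have hroot : f.eval₂ ((algebraMap R B).comp ρ) w = 0 := by
    rw [← eval₂_map, hf, ← aeval_def, minpoly.aeval]
  have hmk (u : R₀[X]) : AdjoinRoot.lift ((algebraMap R B).comp ρ) w hroot (AdjoinRoot.mk f u) =
      aeval w (u.map ρ) := by
    rw [AdjoinRoot.lift_mk, ← eval₂_map, aeval_def]
  refine ⟨AdjoinRoot.lift ((algebraMap R B).comp ρ) w hroot,
    (injective_iff_map_eq_zero _).2 fun x hx => ?_, hmk⟩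
  obtain ⟨u, rfl⟩ := AdjoinRoot.mk_surjective x
  have hfm : f.Monic := monic_of_injective hρ (hf ▸ minpoly.monic hw)
  rw [hmk] at hx
  have hdvd := minpoly.isIntegrallyClosed_dvd hw hx
  rw [AdjoinRoot.mk_eq_zero, ← modByMonic_eq_zero_iff_dvd hfm]
  apply map_injective ρ hρ
  rwa [map_modByMonic ρ hfm, Polynomial.map_zero, hf,
    modByMonic_eq_zero_iff_dvd (minpoly.monic hw)]

lemma linearIndependent_pow_of_isIntegral [IsDomain R] [IsIntegrallyClosed R] [FaithfulSMul R B]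
    {y : B} (hy : IsIntegral R y) :
    LinearIndependent R fun m : Fin (minpoly R y).natDegree => y ^ (m : ℕ) := by
  refine Fintype.linearIndependent_iff.2 fun c hc m => ?_
  have hdvd : minpoly R y ∣ ∑ i : Fin (minpoly R y).natDegree, C (c i) * X ^ (i : ℕ) :=
    minpoly.isIntegrallyClosed_dvd hy (by simpa [Algebra.smul_def] using hc)
  have hzero := eq_zero_of_dvd_of_degree_lt hdvd
    ((degree_sum_fin_lt c).trans_eq (degree_eq_natDegree (minpoly.ne_zero hy)).symm)
  simpa [Fin.val_inj] using congrArg (coeff · m) hzero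

lemma linearIndependent_of_map_eq_mul_pow [IsDomain R] [IsIntegrallyClosed R] [FaithfulSMul R B]
    {M : Type*} [CommRing M] [Algebra R₀ M] {ρ : R₀ →+* R} (hρ : Function.Injective ρ) {i : M →+* B}
    (hi : i.comp (algebraMap R₀ M) = (algebraMap R B).comp ρ) {y : B} (hy : IsIntegral R y)
    {d : B} (hd : d ≠ 0) {S : ℕ → M} (hS : ∀ m < (minpoly R y).natDegree, i (S m) = d * y ^ m) :
    LinearIndependent R₀ fun m : Fin (minpoly R y).natDegree => S m := by
  have hpow := linearIndependent_pow_of_isIntegral hy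
  rw [Fintype.linearIndependent_iff] at hpow ⊢
  intro c hc m
  refine (map_eq_zero_iff ρ hρ).1 (hpow (fun m => ρ (c m)) ?_ m)
  apply mul_left_cancel₀ hd
  rw [mul_zero, ← map_zero i, ← hc, map_sum, Finset.mul_sum]
  refine Finset.sum_congr rfl fun m _ => ?_
  rw [Algebra.smul_def, Algebra.smul_def, map_mul, hS m m.2, ← RingHom.comp_apply i, hi]
  simp only [RingHom.comp_apply]
  ring

end Model

lemma exists_subalgebra_lifts {A : Type*} [CommRing A] {s : Set A[X][X]} (hs : s.Finite) :
    ∃ A₀ : Subalgebra ℤ A, Algebra.FiniteType ℤ A₀ ∧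
      ∀ P ∈ s, P ∈ lifts (mapRingHom (A₀.val : A₀ →+* A)) := by
  let c : Set A := ⋃ P ∈ s, ⋃ r ∈ P.coeffs, (r.coeffs : Set A)
  have hc : c.Finite := hs.biUnion fun P _ => P.coeffs.finite_toSet.biUnion fun r _ =>
    r.coeffs.finite_toSet
  refine ⟨Algebra.adjoin ℤ c, ?_, fun P hP => mem_lifts_mapRingHom_iff.2 fun m n => ?_⟩
  · exact Algebra.FiniteType.adjoin_of_finite hc
  · by_cases hmn : (P.coeff m).coeff n = 0
    · exact ⟨0, by rw [hmn, map_zero]⟩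
    have hm : P.coeff m ≠ 0 := fun h => hmn (by rw [h, coeff_zero])
    refine ⟨⟨_, Algebra.subset_adjoin ?_⟩, rfl⟩
    exact Set.mem_biUnion hP (Set.mem_biUnion (coeff_mem_coeffs hm) (coeff_mem_coeffs hmn))

lemma equivariantSubring_le {L L' B K K' : Type*} [CommRing L] [CommRing L'] [CommRing B]
    [CommRing K] [CommRing K'] {i : L →+* B} {e : L →+* K} {τ : B →+* B} {φ : K →+* K}
    {i' : L' →+* B} {e' : L' →+* K'} {φ' : K' →+* K'} {ι : L →+* L'} (hi : i'.comp ι = i)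
    {g : K →+* K'} (he : e'.comp ι = g.comp e) (hφ : g.comp φ = φ'.comp g) :
    equivariantSubring i e τ φ ≤ equivariantSubring i' e' τ φ' := by
  intro x hx
  obtain ⟨l, m, rfl, hm, hem⟩ := mem_equivariantSubring.1 hx
  refine mem_equivariantSubring.2 ⟨ι l, ι m, RingHom.congr_fun hi l, ?_, ?_⟩
  · exact (RingHom.congr_fun hi m).trans hm
  · calc e' (ι m) = g (e m) := RingHom.congr_fun he m
      _ = φ' (g (e l)) := by rw [hem]; exact RingHom.congr_fun hφ _
      _ = φ' (e' (ι l)) := congrArg φ' (RingHom.congr_fun he l).symm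

lemma injective_comp_algebraMap {R B : Type*} [Field B] [CommRing R] {f : R[X]} (hf : f.Monic)
    {i : AdjoinRoot f →+* B} (hi : Function.Injective i) :
    Function.Injective (i.comp (algebraMap R (AdjoinRoot f))) := by
  have := i.domain_nontrivial
  have := hf.free_adjoinRoot
  exact hi.comp (FaithfulSMul.algebraMap_injective R _)

section Base

variable {A₀ B K : Type*} [CommRing A₀] [Field B] [Field K] {f : A₀[X][X]}

/-- The elements of the base ring `A₀[X]` of the curve `f = 0` whose image in `B` is moved by `τ`
in the same way as `φ` moves the coefficients of their specialization along `H`. -/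
noncomputable def baseSubring (i : AdjoinRoot f →+* B) (H : A₀ →+* K) (τ : B →+* B) (φ : K →+* K) :
    Subring B :=
  equivariantSubring (i.comp (algebraMap A₀[X] (AdjoinRoot f))) (mapRingHom H) τ (mapRingHom φ)

variable {i : AdjoinRoot f →+* B} {H : A₀ →+* K} {τ : B →+* B} {φ : K →+* K}
  {P : AdjoinRoot f →+* K}

/-- At a point whose first coordinate is fixed by `φ`, specialization commutes with `φ`. -/
lemma baseSubring_le (hP : P.comp (algebraMap A₀ (AdjoinRoot f)) = H)
    (hX : φ (P (algebraMap A₀[X] _ X)) = P (algebraMap A₀[X] _ X)) {L : Type*} [CommRing L]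
    {ι : AdjoinRoot f →+* L} {iL : L →+* B} {e : L →+* K} (hiL : iL.comp ι = i)
    (he : e.comp ι = P) : baseSubring i H τ φ ≤ equivariantSubring iL e τ φ := by
  refine equivariantSubring_le (ι := ι.comp (algebraMap A₀[X] (AdjoinRoot f)))
    (g := evalRingHom (P (algebraMap A₀[X] _ X))) ?_ ?_ ?_
  · rw [← RingHom.comp_assoc, hiL]
  · rw [← RingHom.comp_assoc, he]
    refine ringHom_ext (fun a => ?_) (by simp)
    rw [← hP]
    simp [IsScalarTower.algebraMap_apply A₀ A₀[X] (AdjoinRoot f)]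
  · refine ringHom_ext (fun a => by simp) ?_
    simpa using hX.symm

lemma exists_branch_of_mem_curvePoints (hi : Function.Injective i) {D : A₀[X]}
    (hP : P ∈ curvePoints f H D) (hX : φ (P (algebraMap A₀[X] _ X)) = P (algebraMap A₀[X] _ X))
    {d d' : A₀[X]} (hdD : d ∣ D) (hd : i (algebraMap A₀[X] _ d) ∈ baseSubring i H τ φ)
    (hd' : i (algebraMap A₀[X] _ d') = τ (i (algebraMap A₀[X] _ d))) {g : B[X]}
    (hg : ∀ n, g.coeff n ∈ baseSubring i H τ φ) {s : Multiset B}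
    (hs : g.map τ = (s.map fun z => X - C z).prod) {y : B} (hy : g.eval y = 0) {n : ℕ}
    (hn : 1 ≤ n) {S : ℕ → AdjoinRoot f} (hS : ∀ m ≤ n, i (S m) = i (algebraMap A₀[X] _ d) * y ^ m)
    {Z : B → ℕ → AdjoinRoot f}
    (hZ : ∀ z ∈ s, ∀ m ≤ n, i (Z z m) = i (algebraMap A₀[X] _ d) * z ^ m) :
    ∃ z ∈ s, ∀ m ≤ n,
      P (algebraMap A₀[X] _ d) * φ (P (S m)) = P (algebraMap A₀[X] _ d' * Z z m) := by
  obtain ⟨L, _, ι, iL, e, hiL, _, rfl, rfl⟩ := exists_isLocalHom_extension hi P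
  have hle := baseSubring_le (τ := τ) hP.1 hX (iL := iL) rfl rfl
  obtain ⟨z, hz, h⟩ := exists_branch hiL (hle hd) hd' (apply_ne_zero_of_dvd hP hdD)
    (fun n => hle (hg n)) hs hy hn (S := ι ∘ S) hS (Z := fun z m => ι (Z z m)) hZ
  exact ⟨z, hz, fun m hm => by simpa using h m hm⟩

end Base

section FrobeniusExtension

variable {ι k B : Type*} {A₀ : Type u} [Field k] [IsAlgClosed k] {p : ℕ} [Fact p.Prime] [CharP k p]
  [Field B] [CommRing A₀] {W : Ultrafilter ι} {κ : ι → ℕ} {f : A₀[X][X]} {i : AdjoinRoot f →+* B}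
  {h : ι → A₀ →+* k} {τ : B →+* B} {g : B[X]} {y : B} {c d d' : A₀[X]} {S : ℕ → AdjoinRoot f}
  {Z : B → ℕ → AdjoinRoot f}

theorem exists_frobenius_curvePoint (hκ : Tendsto κ W atTop) (hf : f.Monic)
    (hi : Function.Injective i) (hsep : (f.map (i.comp (algebraMap A₀[X] _))).Separable)
    (hh : Function.Injective (germHom W h))
    (hirr : ∀ᶠ N in W, Irreducible (f.map (mapRingHom (h N)))) (hc : c ≠ 0) (hd : d ≠ 0)
    (hdE : i (algebraMap A₀[X] _ d) ∈ baseSubring i (germHom W h) τ (germFrobenius W p κ))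
    (hd' : i (algebraMap A₀[X] _ d') = τ (i (algebraMap A₀[X] _ d))) (hg : g.Monic)
    (hgE : ∀ n, g.coeff n ∈ baseSubring i (germHom W h) τ (germFrobenius W p κ))
    (hsplit : (g.map τ).Splits) (hy : g.eval y = 0)
    (hS : ∀ m ≤ g.natDegree, i (S m) = i (algebraMap A₀[X] _ d) * y ^ m)
    (hlin : LinearIndependent A₀[X] fun m : Fin g.natDegree => S m)
    (hZ : ∀ z ∈ (g.map τ).roots, ∀ m ≤ g.natDegree,
      i (Z z m) = i (algebraMap A₀[X] _ d) * z ^ m) :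
    ∃ P ∈ curvePoints f (germHom W h) (c * d),
      germFrobenius W p κ (P (algebraMap A₀[X] _ X)) = P (algebraMap A₀[X] _ X) ∧
      ∀ m < g.natDegree, P (algebraMap A₀[X] _ d) * germFrobenius W p κ (P (S m)) =
        P (algebraMap A₀[X] _ d' * Z (τ y) m) := by
  classical
  have : IsDomain A₀ := hh.isDomain _
  have := hf.free_adjoinRoot
  have := hf.finite_adjoinRoot
  obtain ⟨D₁, hD₁, u, v, huv⟩ :=
    exists_mul_add_mul_derivative_eq_C (injective_comp_algebraMap hf hi) hsep
  obtain ⟨δ, hδ, T, hT⟩ := exists_dual_functionals hlin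
  let D := c * d * δ * D₁
  have hD0 : D.map (germHom W h) ≠ 0 :=
    (Polynomial.map_ne_zero_iff hh).2
      (mul_ne_zero (mul_ne_zero (mul_ne_zero hc hd) hδ) hD₁)
  have hcdD : c * d ∣ D := ⟨δ * D₁, by ring⟩
  have hbez : ∃ u v, u * f + v * derivative f = C D := by
    refine ⟨C (c * d * δ) * u, C (c * d * δ) * v, ?_⟩
    rw [mul_assoc, mul_assoc _ v, ← mul_add, huv, ← map_mul]
  have hdegree : 1 ≤ g.natDegree := natDegree_pos_of_eval₂_root hg.ne_zero (.id B) hy fun _ => id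
  have hcard : Fintype.card {z // z ∈ (g.map τ).roots.toFinset} ≤
      Fintype.card (Fin g.natDegree) := by
    rw [Fintype.card_coe, Fintype.card_fin, ← hg.natDegree_map τ]
    exact (Multiset.toFinset_card_le _).trans (card_roots' _)
  have hτy : τ y ∈ (g.map τ).roots.toFinset := by
    rw [Multiset.mem_toFinset, mem_roots (hg.map τ).ne_zero, IsRoot, eval_map_apply, hy, map_zero]
  obtain ⟨P, hP, hX, hPS⟩ := exists_germ_curvePoint_of_branches p hκ hf hcard
    (fun z m => algebraMap A₀[X] _ d' * Z z m) hbez ((dvd_mul_left d c).trans hcdD)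
    ((dvd_mul_left δ (c * d)).mul_right D₁) ⟨T, hT⟩ hirr hD0 (fun P hP hX => by
      obtain ⟨z, hz, hPz⟩ := exists_branch_of_mem_curvePoints hi hP hX
        ((dvd_mul_left d c).trans hcdD) hdE hd' hgE
        (hsplit.eq_prod_roots_of_monic (hg.map τ)) hy hdegree hS hZ
      exact ⟨⟨z, Multiset.mem_toFinset.2 hz⟩, fun m => hPz m m.2.le⟩) ⟨τ y, hτy⟩
  exact ⟨P, ⟨hP.1, apply_ne_zero_of_dvd hP hcdD⟩, hX, fun m hm => hPS ⟨m, hm⟩⟩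

theorem exists_frobenius_extension (hκ : Tendsto κ W atTop) (hf : f.Monic)
    (hi : Function.Injective i) (hsep : (f.map (i.comp (algebraMap A₀[X] _))).Separable)
    (hh : Function.Injective (germHom W h))
    (hirr : ∀ᶠ N in W, Irreducible (f.map (mapRingHom (h N)))) (hc : c ≠ 0) (hd : d ≠ 0)
    (hdE : i (algebraMap A₀[X] _ d) ∈ baseSubring i (germHom W h) τ (germFrobenius W p κ))
    (hg : g.Monic)
    (hgE : ∀ n, g.coeff n ∈ baseSubring i (germHom W h) τ (germFrobenius W p κ))
    (hsplit : (g.map τ).Splits) (hy : g.eval y = 0)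
    (hS : ∀ m ≤ g.natDegree, i (S m) = i (algebraMap A₀[X] _ d) * y ^ m)
    (hlin : LinearIndependent A₀[X] fun m : Fin g.natDegree => S m)
    (hZ : ∀ z ∈ (g.map τ).roots, ∀ m ≤ g.natDegree,
      i (Z z m) = i (algebraMap A₀[X] _ d) * z ^ m) :
    ∃ (L : Type u) (_ : CommRing L) (j : AdjoinRoot f →+* L) (iL : L →+* B)
      (e : L →+* (W : Filter ι).Germ k), Function.Injective iL ∧ IsLocalHom e ∧ iL.comp j = i ∧
      (e.comp j).comp (algebraMap A₀ (AdjoinRoot f)) = germHom W h ∧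
      e (j (algebraMap A₀[X] _ c)) ≠ 0 ∧
      baseSubring i (germHom W h) τ (germFrobenius W p κ) ≤
        equivariantSubring iL e τ (germFrobenius W p κ) ∧
      y ∈ equivariantSubring iL e τ (germFrobenius W p κ) := by
  obtain ⟨d₀, d', hd₀, hd', -⟩ := mem_equivariantSubring.1 hdE
  obtain rfl : d = d₀ := injective_comp_algebraMap hf hi hd₀.symm
  obtain ⟨P, hP, hX, hPS⟩ := exists_frobenius_curvePoint hκ hf hi hsep hh hirr hc hd hdE hd' hg hgE
    hsplit hy hS hlin hZ
  obtain ⟨L, _, j, iL, e, hiL, _, rfl, rfl⟩ := exists_isLocalHom_extension hi P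
  have hle := baseSubring_le (τ := τ) hP.1 hX (iL := iL) rfl rfl
  refine ⟨L, _, j, iL, e, hiL, ‹_›, rfl, hP.1, apply_ne_zero_of_dvd hP (dvd_mul_right c d), hle, ?_⟩
  obtain hn | hn := (Nat.succ_le_of_lt <| natDegree_pos_of_eval₂_root hg.ne_zero (.id B) hy
    fun _ => id).eq_or_lt
  · have hyg : y = -g.coeff 0 := by
      rw [hg.eq_X_add_C hn.symm, eval_add, eval_X, eval_C] at hy
      exact eq_neg_of_add_eq_zero_left hy
    exact hyg ▸ neg_mem (hle (hgE 0))
  · have hτy : τ y ∈ (g.map τ).roots := by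
      rw [mem_roots (hg.map τ).ne_zero, IsRoot, eval_map_apply, hy, map_zero]
    refine mem_equivariantSubring_of_branch hiL (hle hdE) hd'
      (apply_ne_zero_of_dvd hP (dvd_mul_left d c)) (l := j (S 1)) (m := j (Z (τ y) 1)) ?_ ?_ ?_
    · simpa using hS 1 hn.le
    · simpa using hZ _ hτy 1 hn.le
    · simpa using hPS 1 hn

end FrobeniusExtension

section Descent

variable {A : Type u} {B : Type*} [Field A] [Field B] [Algebra A[X] B]

lemma exists_curve_model [FaithfulSMul A[X] B] {w : B} (hw : IsIntegral A[X] w) {s : Set A[X]}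
    (hs : s.Finite) {t : Set B} (ht : t.Finite) (htw : ∀ x ∈ t, ∃ u : A[X][X], aeval w u = x) :
    ∃ (A₀ : Subalgebra ℤ A) (f : A₀[X][X]) (i : AdjoinRoot f →+* B), Algebra.FiniteType ℤ A₀ ∧
      f.map (mapRingHom A₀.val) = minpoly A[X] w ∧ Function.Injective i ∧
      i.comp (algebraMap A₀[X] _) = (algebraMap A[X] B).comp (mapRingHom A₀.val) ∧
      (∀ r ∈ s, r ∈ (mapRingHom (A₀.val : A₀ →+* A)).range) ∧ ∀ x ∈ t, x ∈ i.range := by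
  choose! u hu using htw
  obtain ⟨A₀, hfin, hA₀⟩ := exists_subalgebra_lifts
    (((hs.image C).union (ht.image u)).insert (minpoly A[X] w))
  have hj : Function.Injective (mapRingHom (A₀.val : A₀ →+* A)) :=
    map_injective _ Subtype.val_injective
  obtain ⟨f, hf⟩ := (mem_lifts _).1 (hA₀ _ (Set.mem_insert _ _))
  obtain ⟨i, hi, hmk⟩ := exists_injective_adjoinRoot_hom hj hw hf
  refine ⟨A₀, f, i, hfin, hf, hi, RingHom.ext fun r => ?_, fun r hr => ?_, fun x hx => ?_⟩
  · simpa using hmk (C r)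
  · obtain ⟨P, hP⟩ := (mem_lifts _).1 (hA₀ _ (.inr (.inl ⟨r, hr, rfl⟩)))
    exact ⟨P.coeff 0, by simpa using congrArg (coeff · 0) hP⟩
  · obtain ⟨P, hP⟩ := (mem_lifts _).1 (hA₀ _ (.inr (.inr ⟨x, hx, rfl⟩)))
    exact ⟨AdjoinRoot.mk f P, by rw [hmk, hP, hu x hx]⟩

lemma algebraMap_mem_baseSubring {A₀ K : Type*} [CommRing A₀] [Field K] {j : A₀ →+* A} {o : A →+* K}
    {τ : A →+* A} {φ : K →+* K} (ho : φ.comp o = o.comp τ) {τB : B →+* B}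
    (hτB : ∀ r : A[X], τB (algebraMap A[X] B r) = algebraMap A[X] B (r.map τ)) {f : A₀[X][X]}
    {i : AdjoinRoot f →+* B}
    (hi : i.comp (algebraMap A₀[X] _) = (algebraMap A[X] B).comp (mapRingHom j)) {r : A[X]}
    (hr : r ∈ (mapRingHom j).range) (hr' : r.map τ ∈ (mapRingHom j).range) :
    algebraMap A[X] B r ∈ baseSubring i (o.comp j) τB φ := by
  obtain ⟨r₀, rfl⟩ := hr
  obtain ⟨r₁, hr₁⟩ := hr'
  refine mem_equivariantSubring.2 ⟨r₀, r₁, ?_, ?_, ?_⟩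
  · rw [hi, RingHom.comp_apply]
  · rw [hi, RingHom.comp_apply, hr₁, hτB]
  · simp only [coe_mapRingHom] at hr₁ ⊢
    rw [← Polynomial.map_map, hr₁, Polynomial.map_map, Polynomial.map_map, ← ho,
      Polynomial.map_map, RingHom.comp_assoc]

lemma separable_map_of_map_eq_minpoly {A₀ F : Type*} [CommRing A₀] [Field F] [Algebra A[X] F]
    [IsFractionRing A[X] F] [Algebra F B] [IsScalarTower A[X] F B] {w : B}
    (hw : IsIntegral A[X] w) (hwsep : IsSeparable F w) {j : A₀ →+* A} {f : A₀[X][X]}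
    (hf : f.map (mapRingHom j) = minpoly A[X] w) {i : AdjoinRoot f →+* B}
    (hi : i.comp (algebraMap A₀[X] _) = (algebraMap A[X] B).comp (mapRingHom j)) :
    (f.map (i.comp (algebraMap A₀[X] _))).Separable := by
  rw [IsSeparable, minpoly.isIntegrallyClosed_eq_field_fractions' F hw] at hwsep
  rw [hi, ← Polynomial.map_map, hf, IsScalarTower.algebraMap_eq A[X] F B, ← Polynomial.map_map]
  exact hwsep.map

lemma aeval_map_mapRingHom {τ : A →+* A} {τB : B →+* B}
    (hτB : ∀ r : A[X], τB (algebraMap A[X] B r) = algebraMap A[X] B (r.map τ)) (q : A[X][X])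
    (z : B) : aeval z (q.map (mapRingHom τ)) = eval z ((q.map (algebraMap A[X] B)).map τB) := by
  have hcomp : τB.comp (algebraMap A[X] B) = (algebraMap A[X] B).comp (mapRingHom τ) :=
    RingHom.ext hτB
  rw [← eval_map_algebraMap, Polynomial.map_map, Polynomial.map_map, hcomp]

end Descent

section Local

variable {ι k F B : Type*} {A : Type u} [Field k] [IsAlgClosed k] {p : ℕ} [Fact p.Prime] [CharP k p]
  [Field A] [IsAlgClosed A] [Field F] [Field B] [IsAlgClosed B] [Algebra A[X] F]
  [IsFractionRing A[X] F] [Algebra F B] [Algebra A[X] B] [IsScalarTower A[X] F B]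
  {W : Ultrafilter ι} {κ : ι → ℕ} {o : A →+* (W : Filter ι).Germ k} {τ : A →+* A} {τB : B →+* B}

lemma exists_equivariant_of_curve_model (hκ : Tendsto κ W atTop)
    (ho : (germFrobenius W p κ).comp o = o.comp τ)
    (hτB : ∀ r : A[X], τB (algebraMap A[X] B r) = algebraMap A[X] B (r.map τ)) {y w : B}
    (hy : IsIntegral A[X] y) (hw : IsIntegral A[X] w) (hwsep : IsSeparable F w)
    {A₀ : Subalgebra ℤ A} [Algebra.FiniteType ℤ A₀] {f : A₀[X][X]} {i : AdjoinRoot f →+* B}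
    (hf : f.map (mapRingHom A₀.val) = minpoly A[X] w) (hi : Function.Injective i)
    (hij : i.comp (algebraMap A₀[X] _) = (algebraMap A[X] B).comp (mapRingHom A₀.val))
    {s : Set A[X]} (hs : ∀ r ∈ s, r ∈ (mapRingHom (A₀.val : A₀ →+* A)).range)
    (hsτ : ∀ r ∈ s, r.map τ ∈ (mapRingHom (A₀.val : A₀ →+* A)).range)
    {c d : A[X]} (hcs : c ∈ s) (hc : c ≠ 0) (hds : d ∈ s) (hd : d ≠ 0)
    (hys : ∀ n, (minpoly A[X] y).coeff n ∈ s)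
    (hdi : ∀ z, z = y ∨ aeval z ((minpoly A[X] y).map (mapRingHom τ)) = 0 →
      ∀ m ≤ (minpoly A[X] y).natDegree, algebraMap A[X] B d * z ^ m ∈ i.range) :
    ∃ (L : Type u) (_ : CommRing L) (iL : L →+* B) (e : L →+* (W : Filter ι).Germ k),
      Function.Injective iL ∧ IsLocalHom e ∧ (∃ l, iL l = algebraMap A[X] B c ∧ e l ≠ 0) ∧
      (∀ a, C a ∈ s → ∃ l, iL l = algebraMap A[X] B (C a) ∧ e l = o a) ∧
      (∀ r ∈ s, algebraMap A[X] B r ∈ equivariantSubring iL e τB (germFrobenius W p κ)) ∧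
      y ∈ equivariantSubring iL e τB (germFrobenius W p κ) := by
  have := FaithfulSMul.trans A[X] F B
  let q := minpoly A[X] y
  have hqm : q.Monic := minpoly.monic hy
  have hval : Function.Injective (A₀.val : A₀ →+* A) := Subtype.val_injective
  have hfm : f.Monic := monic_of_injective (map_injective _ hval) (hf ▸ minpoly.monic hw)
  obtain ⟨h, hh⟩ := exists_germHom_eq (o.comp (A₀.val : A₀ →+* A))
  have hE (r) (hr : r ∈ s) : algebraMap A[X] B r ∈
      baseSubring i (germHom W h) τB (germFrobenius W p κ) :=
    hh ▸ algebraMap_mem_baseSubring ho hτB hij (hs r hr) (hsτ r hr)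
  obtain ⟨c, rfl⟩ := hs c hcs
  obtain ⟨d, rfl⟩ := hs d hds
  have hbase (r : A₀[X]) : i (algebraMap A₀[X] _ r) = algebraMap A[X] B (mapRingHom A₀.val r) :=
    RingHom.congr_fun hij r
  simp only [← hbase] at hdi
  choose! Z hZ using hdi
  have hg : (q.map (algebraMap A[X] B)).natDegree = q.natDegree := hqm.natDegree_map _
  have hlin : LinearIndependent A₀[X] fun m : Fin q.natDegree => Z y m :=
    linearIndependent_of_map_eq_mul_pow (map_injective _ hval) hij hy
      (hbase d ▸ (FaithfulSMul.algebraMap_eq_zero_iff A[X] B).not.2 hd)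
      fun m hm => hZ y (.inl rfl) m hm.le
  obtain ⟨L, _, j, iL, e, hiL, he, rfl, hej, hec, hle, hye⟩ := exists_frobenius_extension
    (h := h) (τ := τB) (g := q.map (algebraMap A[X] B)) (y := y) (c := c) (d := d) hκ hfm hi
    (separable_map_of_map_eq_minpoly hw hwsep hf hij) (hh ▸ o.injective.comp hval)
    (eventually_irreducible hh hfm (hf ▸ minpoly.irreducible hw)) (ne_zero_of_map hc)
    (ne_zero_of_map hd) (hbase d ▸ hE _ hds) (hqm.map _)
    (fun n => coeff_map (algebraMap A[X] B) n ▸ hE _ (hys n)) (IsAlgClosed.splits _)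
    (by rw [eval_map_algebraMap, minpoly.aeval]) (fun m hm => hZ y (.inl rfl) m (hg ▸ hm))
    (hg.symm ▸ hlin) (fun z hz m hm => hZ z (.inr (by
      rw [aeval_map_mapRingHom hτB, (mem_roots'.1 hz).2])) m (hg ▸ hm))
  refine ⟨L, _, iL, e, hiL, he, ⟨_, hbase c, hec⟩, fun a ha => ?_, fun r hr => hle (hE r hr), hye⟩
  obtain ⟨a₀, ha₀⟩ := hs _ ha
  obtain rfl : A₀.val (a₀.coeff 0) = a := by simpa using congrArg (coeff · 0) ha₀
  refine ⟨j (algebraMap A₀ _ (a₀.coeff 0)), ?_, RingHom.congr_fun (hej.trans hh) (a₀.coeff 0)⟩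
  simpa [IsScalarTower.algebraMap_apply A₀ A₀[X] (AdjoinRoot f)] using hbase (C (a₀.coeff 0))

lemma exists_equivariant_integral (hκ : Tendsto κ W atTop)
    (ho : (germFrobenius W p κ).comp o = o.comp τ)
    (hτB : ∀ r : A[X], τB (algebraMap A[X] B r) = algebraMap A[X] B (r.map τ)) {y w : B}
    (hy : IsIntegral A[X] y) (hw : IsIntegral A[X] w) (hwsep : IsSeparable F w) {c d : A[X]}
    (hc : c ≠ 0) (hd : d ≠ 0)
    (hdw : ∀ z, z = y ∨ aeval z ((minpoly A[X] y).map (mapRingHom τ)) = 0 →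
      ∀ m ≤ (minpoly A[X] y).natDegree,
        ∃ u : A[X][X], aeval w u = algebraMap A[X] B d * z ^ m)
    {s : Set A[X]} (hs : s.Finite) :
    ∃ (L : Type u) (_ : CommRing L) (iL : L →+* B) (e : L →+* (W : Filter ι).Germ k),
      Function.Injective iL ∧ IsLocalHom e ∧ (∃ l, iL l = algebraMap A[X] B c ∧ e l ≠ 0) ∧
      (∀ a, C a ∈ s → ∃ l, iL l = algebraMap A[X] B (C a) ∧ e l = o a) ∧
      (∀ r ∈ s, algebraMap A[X] B r ∈ equivariantSubring iL e τB (germFrobenius W p κ)) ∧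
      y ∈ equivariantSubring iL e τB (germFrobenius W p κ) := by
  have := FaithfulSMul.trans A[X] F B
  let q := minpoly A[X] y
  have hcoeff : (Set.range q.coeff).Finite :=
    (q.coeffs.finite_toSet.insert 0).subset (by
      rintro _ ⟨n, rfl⟩
      exact or_iff_not_imp_left.2 fun hn => coeff_mem_coeffs hn)
  let s' : Set A[X] := insert c (insert d (s ∪ Set.range q.coeff))
  have hs' : s'.Finite := ((hs.union hcoeff).insert d).insert c
  let roots : Set B := insert y ((q.map (mapRingHom τ)).rootSet B)
  have hroots : roots.Finite := (rootSet_finite _ B).insert y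
  have hroot {z : B} : z ∈ roots ↔ z = y ∨ aeval z (q.map (mapRingHom τ)) = 0 := by
    rw [Set.mem_insert_iff, mem_rootSet_of_ne ((minpoly.monic hy).map _).ne_zero]
  obtain ⟨A₀, f, i, _, hf, hi, hij, hs₀, ht₀⟩ := exists_curve_model hw
    (hs'.union (hs'.image (Polynomial.map τ)))
    ((hroots.prod (Set.finite_Iic q.natDegree)).image
      fun x : B × ℕ => algebraMap A[X] B d * x.1 ^ x.2)
    (by rintro _ ⟨⟨z, m⟩, ⟨hz, hm⟩, rfl⟩; exact hdw z (hroot.1 hz) m hm)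
  obtain ⟨L, _, iL, e, hiL, he, hce, hCe, hse, hye⟩ :=
    exists_equivariant_of_curve_model (s := s') hκ ho hτB hy hw hwsep hf hi hij
      (fun r hr => hs₀ r (.inl hr)) (fun r hr => hs₀ _ (.inr ⟨r, hr, rfl⟩)) (.inl rfl) hc
      (.inr (.inl rfl)) hd (fun n => .inr (.inr (.inr ⟨n, rfl⟩)))
      fun z hz m hm => ht₀ _ ⟨(z, m), ⟨hroot.2 hz, hm⟩, rfl⟩
  exact ⟨L, _, iL, e, hiL, he, hce, fun a ha => hCe a (.inr (.inr (.inl ha))),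
    fun r hr => hse r (.inr (.inr (.inl hr))), hye⟩

/-- Chebotarev's theorem for the difference field extension `A ⊆ B`, over a finite set of
elements of `B`. -/
theorem exists_equivariant_of_finite (hκ : Tendsto κ W atTop)
    (ho : (germFrobenius W p κ).comp o = o.comp τ)
    (hτB : ∀ r : A[X], τB (algebraMap A[X] B r) = algebraMap A[X] B (r.map τ)) {T : Set B}
    (hT : T.Finite) (hsep : ∀ t ∈ T, IsSeparable F t) {S : Set A} (hS : S.Finite) :
    ∃ (L : Type u) (_ : CommRing L) (iL : L →+* B) (e : L →+* (W : Filter ι).Germ k),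
      Function.Injective iL ∧ T ⊆ equivariantSubring iL e τB (germFrobenius W p κ) ∧
      ∀ a ∈ S, ∃ l, iL l = algebraMap A[X] B (C a) ∧ e l = o a := by
  have : Infinite F := .of_injective _ (IsFractionRing.injective A[X] F)
  obtain ⟨y, w, hy, hw, hwsep, ⟨c, hc, hTy⟩, d, hd, hdw⟩ := exists_primitive_elements_aeval
    (R := A[X]) (τ := mapRingHom τ) (map_injective τ τ.injective) hT hsep
  choose! u hu using hTy
  let s : Set A[X] := insert c (C '' S ∪ ⋃ t ∈ T, (u t).coeffs)
  have hs : s.Finite := ((hS.image C).union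
    (hT.biUnion fun t _ => (u t).coeffs.finite_toSet)).insert c
  obtain ⟨L, _, iL, e, hiL, _, ⟨l, hl, hel⟩, hC, hsE, hyE⟩ :=
    exists_equivariant_integral hκ ho hτB hy hw hwsep hc hd hdw hs
  refine ⟨L, _, iL, e, hiL, fun t ht => ?_, fun a ha => hC a (.inr (.inl ⟨a, ha, rfl⟩))⟩
  refine mem_equivariantSubring_of_mul hiL (hl ▸ hsE c (.inl rfl)) hel ?_
  rw [hl, ← hu t ht, aeval_def, eval₂_eq_sum, sum_def]
  exact sum_mem fun n hn => mul_mem (hsE _ (.inr (.inr (Set.mem_biUnion ht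
    (coeff_mem_coeffs (mem_support_iff.1 hn)))))) (pow_mem hyE n)

end Local

section Saturation

variable {ι k L B : Type*} [CommRing k] {p : ℕ} [Fact p.Prime] [CharP k p] [CommRing L] [CommRing B]
  {l : Filter ι} {κ : ι → ℕ} {τ : B →+* B}

lemma eventually_extend_of_mem_equivariantSubring {i : L →+* B} (hi : Function.Injective i)
    {e : L →+* l.Germ k} {r : L → ι → k} (hr : ∀ x, (r x : l.Germ k) = e x) {x y : B}
    (hx : x ∈ equivariantSubring i e τ (germFrobenius l p κ))
    (hy : y ∈ equivariantSubring i e τ (germFrobenius l p κ)) :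
    ∀ᶠ N in l, let g := Function.extend i (r · N) 0
      g (x + y) = g x + g y ∧ g (x * y) = g x * g y ∧ g (τ x) = g x ^ p ^ κ N := by
  obtain ⟨a, a', rfl, ha', hea⟩ := mem_equivariantSubring.1 hx
  obtain ⟨b, _, rfl, -⟩ := mem_equivariantSubring.1 hy
  have hadd : (r (a + b) : l.Germ k) = ((r a + r b : ι → k) : l.Germ k) := by
    rw [Germ.coe_add, hr, hr, hr, map_add]
  have hmul : (r (a * b) : l.Germ k) = ((r a * r b : ι → k) : l.Germ k) := by
    rw [Germ.coe_mul, hr, hr, hr, map_mul]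
  rw [← hr, ← hr, germFrobenius_coe] at hea
  filter_upwards [Germ.coe_eq.1 hadd, Germ.coe_eq.1 hmul, Germ.coe_eq.1 hea] with N h₁ h₂ h₃
  rw [← ha', ← map_add, ← map_mul]
  simp only [hi.extend_apply]
  exact ⟨h₁, h₂, h₃⟩

lemma exists_equivariant_germHom_of_finite {A C : Type*} [CommRing A] [CommRing C] [Countable A]
    [Countable C] (hκ : Tendsto κ l atTop) {o : A →+* l.Germ k} {o₀ : A →+* C} {ν : C →+* B}
    {τC : C →+* C} (hτC : ∀ x, ν (τC x) = τ (ν x))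
    (h : ∀ T : Set C, T.Finite → ∀ S : Set A, S.Finite →
      ∃ (L : Type u) (_ : CommRing L) (i : L →+* B) (e : L →+* l.Germ k), Function.Injective i ∧
        ν '' T ⊆ equivariantSubring i e τ (germFrobenius l p κ) ∧
        ∀ a ∈ S, ∃ x, i x = ν (o₀ a) ∧ e x = o a) :
    ∃ oC : C →+* l.Germ k, (germFrobenius l p κ).comp oC = oC.comp τC ∧ oC.comp o₀ = o := by
  choose r hr using fun a => Quotient.exists_rep (o a)
  obtain ⟨en, hen⟩ := exists_surjective_nat (C × C × A)
  let c : C × C × A → ι → (C → k) → Prop := fun v N g =>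
    (g (v.1 + v.2.1) = g v.1 + g v.2.1 ∧ g (v.1 * v.2.1) = g v.1 * g v.2.1 ∧
      g (τC v.1) = g v.1 ^ p ^ κ N) ∧ g (o₀ v.2.2) = r v.2.2 N
  obtain ⟨g, hg⟩ := exists_forall_eventually_of_tendsto hκ (fun n => c (en n)) fun n => by
    let V : Set (C × C × A) := en '' Set.Iio n
    have hV : V.Finite := (Set.finite_Iio n).image en
    obtain ⟨L, _, i, e, hi, hT, hS⟩ := h (Prod.fst '' V ∪ (fun v => v.2.1) '' V)
      ((hV.image _).union (hV.image _)) ((fun v => v.2.2) '' V) (hV.image _)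
    choose r' hr' using fun x => Quotient.exists_rep (e x)
    have hcV : ∀ v ∈ V, ∀ᶠ N in l, c v N fun x => Function.extend i (r' · N) 0 (ν x) := by
      intro v hv
      obtain ⟨x, hx, hex⟩ := hS _ ⟨v, hv, rfl⟩
      filter_upwards [eventually_extend_of_mem_equivariantSubring hi hr'
        (hT ⟨_, .inl ⟨v, hv, rfl⟩, rfl⟩) (hT ⟨_, .inr ⟨v, hv, rfl⟩, rfl⟩),
        Germ.coe_eq.1 ((hr' x).trans (hex.trans (hr v.2.2).symm))] with N hN hN'
      rw [← map_add, ← map_mul, ← hτC] at hN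
      refine ⟨hN, ?_⟩
      simpa only [← hx, hi.extend_apply] using hN'
    filter_upwards [(Filter.eventually_all_finite hV).2 hcV] with N hN
    exact ⟨fun x => Function.extend i (r' · N) 0 (ν x), fun m hm => hN _ ⟨m, hm, rfl⟩⟩
  have hg (x y : C) (a : A) : ∀ᶠ N in l, c (x, y, a) N (g N) := by
    obtain ⟨n, hn⟩ := hen (x, y, a)
    exact hn ▸ hg n
  have hga (a : A) : ((fun N => g N (o₀ a) : ι → k) : l.Germ k) = o a :=
    (Germ.coe_eq.2 ((hg 0 0 a).mono fun N hN => hN.2)).trans (hr a)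
  let oC : C →+* l.Germ k :=
    { toFun x := (fun N => g N x : ι → k)
      map_one' := by simpa using hga 1
      map_zero' := by simpa using hga 0
      map_mul' x y := Germ.coe_eq.2 ((hg x y 0).mono fun N hN => hN.1.2.1)
      map_add' x y := Germ.coe_eq.2 ((hg x y 0).mono fun N hN => hN.1.1) }
  exact ⟨oC, RingHom.ext fun x => Germ.coe_eq.2 ((hg x 0 0).mono fun N hN => hN.1.2.2.symm),
    RingHom.ext hga⟩

end Saturation

section Extension

lemma isSeparable_apply {A F B : Type*} [Field A] [Field F] [Field B] [Algebra A[X] F]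
    [IsFractionRing A[X] F] [Algebra F B] [Algebra A[X] B] [IsScalarTower A[X] F B] {τ : A →+* A}
    {τB : B →+* B} (hτB : ∀ r : A[X], τB (algebraMap A[X] B r) = algebraMap A[X] B (r.map τ))
    {x : B} (hx : IsSeparable F x) : IsSeparable F (τB x) := by
  obtain ⟨c, hc, g, hg⟩ := exists_map_eq_C_mul (R := A[X]) (minpoly F x)
  have hcF : algebraMap A[X] F c ≠ 0 := (map_ne_zero_iff _ (IsFractionRing.injective A[X] F)).2 hc
  have hgx : aeval x g = 0 := by
    rw [← aeval_map_algebraMap F, hg, map_mul, minpoly.aeval, mul_zero]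
  have hgsep : (g.map (algebraMap A[X] F)).Separable :=
    hg ▸ Separable.unit_mul (isUnit_C.2 hcF.isUnit) hx
  refine isSeparable_of_aeval_map_eq_zero (τ := mapRingHom τ) (map_injective τ τ.injective) hgsep ?_
  rw [aeval_map_mapRingHom hτB, eval_map_apply, eval_map_algebraMap, hgx, map_zero]

variable {ι k F B : Type*} {A : Type u} [Field k] [IsAlgClosed k] {p : ℕ} [Fact p.Prime] [CharP k p]
  [Field A] [IsAlgClosed A] [Field F] [Field B] [IsAlgClosed B] [Algebra A[X] F]
  [IsFractionRing A[X] F] [Algebra F B] [Algebra A[X] B] [IsScalarTower A[X] F B]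
  {W : Ultrafilter ι} {κ : ι → ℕ} {o : A →+* (W : Filter ι).Germ k} {τ : A →+* A} {τB : B →+* B}

lemma exists_equivariant_separableClosure_hom [Countable B] (hκ : Tendsto κ W atTop)
    (ho : (germFrobenius W p κ).comp o = o.comp τ)
    (hτB : ∀ r : A[X], τB (algebraMap A[X] B r) = algebraMap A[X] B (r.map τ)) :
    ∃ oC : separableClosure F B →+* (W : Filter ι).Germ k,
      (∀ x y : separableClosure F B, τB x = y → oC y = germFrobenius W p κ (oC x)) ∧
      ∀ (x : separableClosure F B) (a : A), (x : B) = algebraMap A[X] B (C a) → oC x = o a := by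
  have := FaithfulSMul.trans A[X] F B
  let C₀ := separableClosure F B
  let τC : C₀ →+* C₀ := τB.restrict C₀ C₀ fun x hx =>
    mem_separableClosure_iff.2 (isSeparable_apply hτB (mem_separableClosure_iff.1 hx))
  have : Countable A := ((FaithfulSMul.algebraMap_injective A[X] B).comp C_injective).countable
  obtain ⟨oC, hoC, hoA⟩ := exists_equivariant_germHom_of_finite hκ (o := o) (ν := algebraMap C₀ B)
    (τ := τB) (τC := τC) (o₀ := (algebraMap F C₀).comp ((algebraMap A[X] F).comp C))
    (fun x => rfl) fun T hT S hS => by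
      obtain ⟨L, _, i, e, hi, hTE, hSE⟩ := exists_equivariant_of_finite (F := F) hκ ho hτB
        (hT.image (algebraMap C₀ B)) (by
          rintro _ ⟨x, -, rfl⟩
          exact mem_separableClosure_iff.1 x.2) hS
      refine ⟨L, _, i, e, hi, hTE, fun a ha => ?_⟩
      obtain ⟨l, hl, hle⟩ := hSE a ha
      exact ⟨l, by rw [hl, IsScalarTower.algebraMap_apply A[X] F B]; rfl, hle⟩
  refine ⟨oC, fun x y hxy => ?_, fun x a hxa => ?_⟩
  · obtain rfl : τC x = y := Subtype.ext hxy
    exact (RingHom.congr_fun hoC x).symm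
  · rw [← hoA]
    exact congrArg oC (Subtype.ext (hxa.trans (IsScalarTower.algebraMap_apply A[X] F B _)))

theorem exists_equivariant_extension [Algebra.IsAlgebraic F B] [Countable B]
    (hκ : Tendsto κ W atTop) (ho : (germFrobenius W p κ).comp o = o.comp τ)
    (hτB : ∀ r : A[X], τB (algebraMap A[X] B r) = algebraMap A[X] B (r.map τ)) :
    ∃ oB : B →+* (W : Filter ι).Germ k, (germFrobenius W p κ).comp oB = oB.comp τB ∧
      ∀ a, oB (algebraMap A[X] B (C a)) = o a := by
  obtain ⟨oC, hoC, hoA⟩ := exists_equivariant_separableClosure_hom (F := F) hκ ho hτB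
  let C₀ := separableClosure F B
  let : Algebra C₀ (W.Germ k) := oC.toAlgebra
  have : Algebra.IsAlgebraic C₀ B := Algebra.IsAlgebraic.tower_top (K := F) C₀
  have : IsTorsionFree C₀ (W.Germ k) := isTorsionFree_iff_algebraMap_injective.2 oC.injective
  let oB : B →ₐ[C₀] W.Germ k := IsAlgClosed.lift
  have hoB (x : C₀) : oB x = oC x := oB.commutes x
  refine ⟨oB, IsPurelyInseparable.injective_comp_algebraMap C₀ B _ (RingHom.ext fun x => ?_),
    fun a => ?_⟩
  · have hτx : τB x ∈ C₀ :=
      mem_separableClosure_iff.2 (isSeparable_apply hτB (mem_separableClosure_iff.1 x.2))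
    exact (congrArg (germFrobenius W p κ) (hoB x)).trans
      ((hoC x ⟨_, hτx⟩ rfl).symm.trans (hoB ⟨_, hτx⟩).symm)
  · have ha : algebraMap A[X] B (C a) ∈ C₀ := by
      rw [IsScalarTower.algebraMap_apply A[X] F B]
      exact algebraMap_mem C₀ _
    exact (hoB ⟨_, ha⟩).trans (hoA ⟨_, ha⟩ a rfl)

end Extension

lemma countable_of_isAlgebraic (R B : Type*) [CommRing R] [Countable R] [CommRing B] [IsDomain B]
    [Algebra R B] [FaithfulSMul R B] [Algebra.IsAlgebraic R B] : Countable B := by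
  have := (FaithfulSMul.algebraMap_injective R B).isDomain
  have := isTorsionFree_iff_faithfulSMul.2 ‹FaithfulSMul R B›
  refine Set.countable_univ_iff.1 ((Algebraic.countable R B).mono fun b _ => ?_)
  exact Algebra.IsAlgebraic.isAlgebraic b

lemma countable_polynomial (A : Type*) [CommRing A] [Countable A] : Countable A[X] :=
  Cardinal.mk_le_aleph0_iff.1 <|
    cardinalMk_le_max.trans (max_le (Cardinal.mk_le_aleph0_iff.2 ‹_›) le_rfl)

lemma exists_endomorphism_of_isAlgebraic {R B K : Type*} [CommRing R] [Field B] [IsAlgClosed B]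
    [Field K] [Algebra R B] [FaithfulSMul R B] [Algebra.IsAlgebraic R B] {i : B →+* K}
    {φ : K →+* K} {ρ : R →+* R} (hρ : Function.Injective ρ)
    (hφ : ∀ r, φ (i (algebraMap R B r)) = i (algebraMap R B (ρ r))) :
    ∃ τ : B →+* B, φ.comp i = i.comp τ ∧ ∀ r, τ (algebraMap R B r) = algebraMap R B (ρ r) := by
  have hmem (b : B) : φ (i b) ∈ i.range := by
    obtain ⟨P, hP, hPb⟩ := Algebra.IsAlgebraic.isAlgebraic (R := R) b
    have hinj := (FaithfulSMul.algebraMap_injective R B).comp hρ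
    refine (IsAlgClosed.splits (P.map ((algebraMap R B).comp ρ))).mem_range_of_isRoot
      ((Polynomial.map_ne_zero_iff hinj).2 hP) ?_
    have hcomp : i.comp ((algebraMap R B).comp ρ) = φ.comp (i.comp (algebraMap R B)) :=
      RingHom.ext fun r => (hφ r).symm
    rw [IsRoot, eval_map, eval₂_map, hcomp, ← hom_eval₂, ← hom_eval₂, ← aeval_def, hPb,
      map_zero, map_zero]
  let e : B ≃+* i.range := .ofBijective i.rangeRestrict
    ⟨fun x y h => i.injective (congrArg Subtype.val h), i.rangeRestrict_surjective⟩
  let τ : B →+* B := (e.symm : i.range →+* B).comp ((φ.comp i).codRestrict i.range hmem)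
  have hτ (b : B) : i (τ b) = φ (i b) := congrArg Subtype.val (e.apply_symm_apply _)
  exact ⟨τ, RingHom.ext fun b => (hτ b).symm, fun r => i.injective ((hτ _).trans (hφ r))⟩

instance {R : Type*} [CommRing R] [IsDomain R] :
    FaithfulSMul R (AlgebraicClosure (FractionRing R)) :=
  .trans R (FractionRing R) _

instance {R : Type*} [CommRing R] [IsDomain R] :
    Algebra.IsAlgebraic R (AlgebraicClosure (FractionRing R)) :=
  (IsFractionRing.comap_isAlgebraic_iff (K := FractionRing R)).2 inferInstance

lemma exists_difference_field_extension {A K : Type*} [Field A] [IsAlgClosed A] [Field K]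
    [IsAlgClosed K] {φ : K →+* K} {o : A →+* K} {τ : A →+* A} (ho : φ.comp o = o.comp τ) {a : K}
    (ha : φ a = a) (hao : a ∉ o.range) :
    ∃ (oB : AlgebraicClosure (FractionRing A[X]) →+* K) (τB : _ →+* _),
      φ.comp oB = oB.comp τB ∧ (∀ P : A[X], oB (algebraMap A[X] _ P) = P.eval₂ o a) ∧
      ∀ P : A[X], τB (algebraMap A[X] _ P) = algebraMap A[X] _ (P.map τ) := by
  let B := AlgebraicClosure (FractionRing A[X])
  have hinj : Function.Injective (eval₂RingHom o a) := by
    refine (injective_iff_map_eq_zero _).2 fun P hP => by_contra fun hP0 => hao ?_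
    exact (IsAlgClosed.splits P).mem_range_of_isRoot hP0 (by rwa [IsRoot, eval_map])
  let θ : FractionRing A[X] →+* K := IsFractionRing.lift hinj
  let : Algebra (FractionRing A[X]) K := θ.toAlgebra
  let oB : B →ₐ[FractionRing A[X]] K := IsAlgClosed.lift
  have hoB (P : A[X]) : oB (algebraMap A[X] B P) = P.eval₂ o a := by
    rw [IsScalarTower.algebraMap_apply A[X] (FractionRing A[X]) B, oB.commutes]
    exact IsFractionRing.lift_algebraMap hinj P
  have hφ (P : A[X]) : φ (oB (algebraMap A[X] B P)) = oB (algebraMap A[X] B (mapRingHom τ P)) := by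
    rw [hoB, hoB, coe_mapRingHom, eval₂_map, hom_eval₂, ho, ha]
  obtain ⟨τB, hτB, hτP⟩ := exists_endomorphism_of_isAlgebraic (i := (oB : B →+* K))
    (map_injective τ τ.injective) hφ
  exact ⟨oB, τB, hτB, hoB, hτP⟩

/-- Tuples `x` and `x'` in the difference fields `(K, φ)` and `(K', φ')` are similar if they are
the images of one tuple of a countable algebraically closed difference field `(A, τ)` that embeds
into both. -/
def Similar {α K K' : Type*} [Field K] [Field K'] (φ : K →+* K) (φ' : K' →+* K') (x : α → K)
    (x' : α → K') : Prop :=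
  ∃ (A : Type) (_ : Field A) (_ : IsAlgClosed A) (_ : Countable A) (τ : A →+* A) (o : A →+* K)
    (o' : A →+* K') (z : α → A), φ.comp o = o.comp τ ∧ φ'.comp o' = o'.comp τ ∧
      o ∘ z = x ∧ o' ∘ z = x'

lemma Similar.symm {α K K' : Type*} [Field K] [Field K'] {φ : K →+* K} {φ' : K' →+* K'}
    {x : α → K} {x' : α → K'} : Similar φ φ' x x' → Similar φ' φ x' x :=
  fun ⟨A, hA, hcl, hct, τ, o, o', z, ho, ho', hz, hz'⟩ =>
    ⟨A, hA, hcl, hct, τ, o', o, z, ho', ho, hz', hz⟩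

section Frobenius

variable {ι k : Type*} [Field k] [IsAlgClosed k] {p : ℕ} [Fact p.Prime] [CharP k p]
  {W : Ultrafilter ι}

theorem Similar.exists_snoc {κ' : ι → ℕ} {K : Type*} [Field K] [IsAlgClosed K] {φ : K →+* K}
    (hκ' : Tendsto κ' W atTop) {n : ℕ} {x : Fin n → K} {x' : Fin n → (W : Filter ι).Germ k}
    (h : Similar φ (germFrobenius W p κ') x x') {a : K} (ha : φ a = a) :
    ∃ a', germFrobenius W p κ' a' = a' ∧ Similar φ (germFrobenius W p κ')
      (Fin.snoc x a : Fin (n + 1) → K) (Fin.snoc x' a' : Fin (n + 1) → (W : Filter ι).Germ k) := by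
  obtain ⟨A, _, _, _, τ, o, o', z, ho, ho', rfl, rfl⟩ := h
  by_cases hao : a ∈ o.range
  · obtain ⟨z₀, rfl⟩ := hao
    have hτ : τ z₀ = z₀ := o.injective ((RingHom.congr_fun ho z₀).symm.trans ha)
    refine ⟨o' z₀, (RingHom.congr_fun ho' z₀).trans (congrArg o' hτ), A, _, ‹_›, ‹_›, τ, o, o',
      Fin.snoc z z₀, ho, ho', Fin.comp_snoc .., Fin.comp_snoc ..⟩
  · obtain ⟨oB, τB, hoB, hoP, hτB⟩ := exists_difference_field_extension ho ha hao
    let B := AlgebraicClosure (FractionRing A[X])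
    have := countable_polynomial A
    have := countable_of_isAlgebraic A[X] B
    obtain ⟨oB', hoB', hoC⟩ :=
      exists_equivariant_extension (F := FractionRing A[X]) hκ' ho' hτB
    have hX : τB (algebraMap A[X] B X) = algebraMap A[X] B X := by rw [hτB, map_X]
    let zB (i : Fin n) : B := algebraMap A[X] B (C (z i))
    have hz : oB ∘ zB = o ∘ z := funext fun i => (hoP _).trans (eval₂_C ..)
    have hz' : oB' ∘ zB = o' ∘ z := funext fun i => hoC _
    refine ⟨oB' (algebraMap A[X] B X), (RingHom.congr_fun hoB' _).trans (congrArg oB' hX), B,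
      inferInstance, inferInstance, ‹_›, τB, oB, oB', Fin.snoc zB (algebraMap A[X] B X), hoB, hoB',
      ?_, ?_⟩
    · rw [Fin.comp_snoc, hz, hoP, eval₂_X]
    · rw [Fin.comp_snoc, hz']

end Frobenius

section ConstantGerms

variable {p : ℕ} [Fact p.Prime]

lemma exists_pow_pow_eq_self {B : Type*} [Field B] [Algebra (ZMod p) B]
    [Algebra.IsAlgebraic (ZMod p) B] (b : B) : ∃ m, 0 < m ∧ b ^ p ^ m = b := by
  let F := IntermediateField.adjoin (ZMod p) {b}
  have : FiniteDimensional (ZMod p) F :=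
    IntermediateField.adjoin.finiteDimensional (Algebra.IsIntegral.isIntegral b)
  have : Finite F := Module.finite_of_finite (ZMod p)
  let : Fintype F := Fintype.ofFinite F
  have hb := FiniteField.pow_card (⟨b, IntermediateField.mem_adjoin_simple_self _ b⟩ : F)
  rw [Module.card_eq_pow_finrank (K := ZMod p), ZMod.card] at hb
  exact ⟨_, Module.finrank_pos (R := ZMod p), congrArg Subtype.val hb⟩

instance : CharP (AlgebraicClosure (ZMod p)) p :=
  charP_of_injective_algebraMap (algebraMap (ZMod p) _).injective p

lemma germFrobenius_add_factorial_comp_germHom {l : Filter ℕ} (hl : l ≤ atTop) (κ : ℕ → ℕ) :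
    (germFrobenius l p fun N => κ N + N.factorial).comp
        (germHom l fun _ => .id (AlgebraicClosure (ZMod p))) =
      (germFrobenius l p κ).comp (germHom l fun _ => .id _) := by
  ext b
  obtain ⟨m, hm, hb⟩ := exists_pow_pow_eq_self (p := p) b
  refine Germ.coe_eq.2 (hl ((eventually_ge_atTop m).mono fun N hN => ?_))
  obtain ⟨c, hc⟩ := Nat.dvd_factorial hm hN
  have hfix : b ^ p ^ N.factorial = b := by
    have := Function.IsFixedPt.iterate (f := (· ^ p ^ m)) hb c
    rwa [pow_iterate, ← pow_mul, ← hc] at this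
  simp only [RingHom.pi_apply, RingHom.id_apply, pow_add, mul_comm (p ^ κ N), pow_mul, hfix]

lemma similar_of_isEmpty {W : Ultrafilter ℕ} (hW : (W : Filter ℕ) ≤ atTop) (κ : ℕ → ℕ) {α : Type*}
    [IsEmpty α] (x x' : α → (W : Filter ℕ).Germ (AlgebraicClosure (ZMod p))) :
    Similar (germFrobenius W p κ) (germFrobenius W p fun N => κ N + N.factorial) x x' := by
  let B := AlgebraicClosure (ZMod p)
  let o : B →+* (W : Filter ℕ).Germ B := germHom (W : Filter ℕ) fun _ => .id B
  have hconst : ((germFrobenius W p κ).comp o).comp (algebraMap (ZMod p) B) =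
      o.comp (algebraMap (ZMod p) B) := RingHom.ext_zmod ..
  obtain ⟨τ, hτ, -⟩ := exists_endomorphism_of_isAlgebraic (R := ZMod p) (i := o)
    (φ := germFrobenius W p κ) (ρ := .id _) Function.injective_id (RingHom.congr_fun hconst)
  refine ⟨B, _, inferInstance, countable_of_isAlgebraic (ZMod p) B, τ, o, o, isEmptyElim, hτ,
    ?_, Subsingleton.elim .., Subsingleton.elim ..⟩
  rw [← hτ]
  exact germFrobenius_add_factorial_comp_germHom hW κ

end ConstantGerms

section ElementaryEquivalence

open FirstOrder.Language

lemma realize_iff_of_back_and_forth {L : Language} {M N : Type*} [L.Structure M] [L.Structure N]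
    {R : ∀ {n}, (Fin n → M) → (Fin n → N) → Prop}
    (hatom : ∀ {n x y} {θ : L.BoundedFormula Empty n}, θ.IsAtomic → R x y →
      (θ.Realize default x ↔ θ.Realize default y))
    (hforth : ∀ {n} {x : Fin n → M} {y : Fin n → N}, R x y → ∀ a, ∃ b,
      R (Fin.snoc x a : Fin (n + 1) → M) (Fin.snoc y b : Fin (n + 1) → N))
    (hback : ∀ {n} {x : Fin n → M} {y : Fin n → N}, R x y → ∀ b, ∃ a,
      R (Fin.snoc x a : Fin (n + 1) → M) (Fin.snoc y b : Fin (n + 1) → N))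
    {n : ℕ} {x : Fin n → M} {y : Fin n → N} (h : R x y) (θ : L.BoundedFormula Empty n) :
    θ.Realize default x ↔ θ.Realize default y := by
  induction θ with
  | falsum => rfl
  | equal t₁ t₂ => exact hatom (.equal t₁ t₂) h
  | rel r ts => exact hatom (.rel r ts) h
  | imp θ₁ θ₂ ih₁ ih₂ => exact imp_congr (ih₁ h) (ih₂ h)
  | all θ ih =>
    refine ⟨fun hx b => ?_, fun hy a => ?_⟩
    · obtain ⟨a, hab⟩ := hback h b
      exact (ih hab).1 (hx a)
    · obtain ⟨b, hab⟩ := hforth h a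
      exact (ih hab).2 (hy b)

attribute [local instance] Ring.compatibleRingOfRing

lemma map_realize_term {R S α : Type*} [CommRing R] [CommRing S] (f : R →+* S)
    (t : Language.ring.Term α) (v : α → R) : f (t.realize v) = t.realize (f ∘ v) := by
  induction t with
  | var a => rfl
  | func F ts ih => cases F <;> simp [Term.realize, ih, Ring.CompatibleRing.funMap_add]

/-- The fixed field of an endomorphism of a field. -/
def fixedField {K : Type*} [Field K] (φ : K →+* K) : Subfield K := φ.eqLocusField (.id K)

section FixedField

variable {α K K' : Type*} [Field K] [Field K'] {φ : K →+* K} {φ' : K' →+* K'}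

lemma coe_realize_fixedField (t : Language.ring.Term α) (x : α → fixedField φ) :
    ((t.realize x : fixedField φ) : K) = t.realize (Subtype.val ∘ x) :=
  map_realize_term (fixedField φ).subtype t x

lemma Similar.comp {β : Type*} {x : α → K} {x' : α → K'} (e : β → α) :
    Similar φ φ' x x' → Similar φ φ' (x ∘ e) (x' ∘ e) :=
  fun ⟨A, hA, hcl, hct, τ, o, o', z, ho, ho', hz, hz'⟩ =>
    ⟨A, hA, hcl, hct, τ, o, o', z ∘ e, ho, ho', congrArg (· ∘ e) hz, congrArg (· ∘ e) hz'⟩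

lemma Similar.realize_eq_iff {x : α → fixedField φ} {x' : α → fixedField φ'}
    (h : Similar φ φ' (Subtype.val ∘ x) (Subtype.val ∘ x'))
    (t₁ t₂ : Language.ring.Term α) :
    t₁.realize x = t₂.realize x ↔ t₁.realize x' = t₂.realize x' := by
  obtain ⟨A, _, -, -, τ, o, o', z, -, -, hx, hx'⟩ := h
  rw [← Subtype.coe_inj, ← Subtype.coe_inj, coe_realize_fixedField, coe_realize_fixedField,
    coe_realize_fixedField, coe_realize_fixedField, ← hx, ← hx', ← map_realize_term,
    ← map_realize_term, ← map_realize_term, ← map_realize_term, o.injective.eq_iff,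
    o'.injective.eq_iff]

end FixedField

section Frobenius

variable {ι k : Type*} [Field k] {p : ℕ} [Fact p.Prime] [CharP k p] {W : Ultrafilter ι}

theorem Similar.fixedField_elementarilyEquivalent [IsAlgClosed k] {κ κ' : ι → ℕ}
    (hκ : Tendsto κ W atTop) (hκ' : Tendsto κ' W atTop) {x x' : Fin 0 → (W : Filter ι).Germ k}
    (h : Similar (germFrobenius W p κ) (germFrobenius W p κ') x x') :
    fixedField (germFrobenius (k := k) W p κ) ≅[Language.ring]
      fixedField (germFrobenius (k := k) W p κ') := by
  refine elementarilyEquivalent_iff.2 fun σ => realize_iff_of_back_and_forth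
    (R := fun x x' => Similar (germFrobenius W p κ) (germFrobenius W p κ') (Subtype.val ∘ x)
      (Subtype.val ∘ x')) ?_ ?_ ?_ ?_ σ
  · rintro n x y _ (⟨t₁, t₂⟩ | ⟨⟨⟩, _⟩) hxy
    have hsum {M : Type _} (v : Fin n → M) :
        Sum.elim default v = v ∘ Sum.elim (isEmptyElim : Empty → Fin n) id :=
      funext (Sum.rec isEmptyElim fun _ => rfl)
    rw [BoundedFormula.realize_bdEqual, BoundedFormula.realize_bdEqual, hsum, hsum]
    exact (hxy.comp _).realize_eq_iff t₁ t₂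
  · intro n x y hxy a
    obtain ⟨b, hb, hab⟩ := hxy.exists_snoc hκ' a.2
    refine ⟨⟨b, hb⟩, ?_⟩
    rwa [Fin.comp_snoc, Fin.comp_snoc]
  · intro n x y hxy b
    obtain ⟨a, ha, hab⟩ := hxy.symm.exists_snoc hκ b.2
    refine ⟨⟨a, ha⟩, ?_⟩
    rw [Fin.comp_snoc, Fin.comp_snoc]
    exact hab.symm
  · convert h

variable {E : ι → Type*} [∀ N, Field (E N)] {κ : ι → ℕ} {j : ∀ N, E N →+* k}

lemma exists_bijective_product_fixedField
    (hj : ∀ᶠ N in W, ∀ y, y ^ p ^ κ N = y ↔ y ∈ (j N).range) :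
    ∃ g : (W : Filter ι).Product E → fixedField (germFrobenius (k := k) W p κ),
      Function.Bijective g ∧
        ∀ x : ∀ N, E N, (g x : (W : Filter ι).Germ k) =
          ((fun N => j N (x N) : ι → k) : (W : Filter ι).Germ k) := by
  let g (x : (W : Filter ι).Product E) : fixedField (germFrobenius (k := k) W p κ) :=
    Quotient.liftOn x (fun x => ⟨((fun N => j N (x N) : ι → k) : (W : Filter ι).Germ k),
      Germ.coe_eq.2 (hj.mono fun N hN => (hN _).2 ⟨x N, rfl⟩)⟩)
      fun x y h => Subtype.ext (Germ.coe_eq.2 (h.mono fun N hN => congrArg (j N) hN))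
  refine ⟨g, ⟨fun x y => ?_, ?_⟩, fun x => rfl⟩
  · refine Quotient.inductionOn₂ x y fun x y hxy => Quotient.sound ?_
    exact (Germ.coe_eq.1 (congrArg Subtype.val hxy)).mono fun N hN => (j N).injective hN
  · rintro ⟨y, hy⟩
    obtain ⟨y, rfl⟩ := Quotient.exists_rep y
    refine ⟨((fun N => Function.invFun (j N) (y N) : ∀ N, E N) : (W : Filter ι).Product E),
      Subtype.ext (Germ.coe_eq.2 ?_)⟩
    filter_upwards [hj, Germ.coe_eq.1 hy] with N hN hyN
    exact Function.invFun_eq ((hN _).1 hyN)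

lemma nonempty_product_equiv_fixedField
    (hj : ∀ᶠ N in W, ∀ y, y ^ p ^ κ N = y ↔ y ∈ (j N).range) :
    Nonempty ((W : Filter ι).Product E ≃[Language.ring]
      fixedField (germFrobenius (k := k) W p κ)) := by
  obtain ⟨g, hg, hgx⟩ := exists_bijective_product_fixedField hj
  refine ⟨⟨.ofBijective g hg, fun {n} F x => ?_, fun r => r.elim⟩⟩
  obtain ⟨x, rfl⟩ : ∃ y : Fin n → ∀ N, E N, (fun i => (y i : (W : Filter ι).Product E)) = x :=
    ⟨fun i => (x i).out, funext fun i => Quotient.out_eq _⟩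
  refine (congrArg g (Ultraproduct.funMap_cast F x)).trans (Subtype.ext ((hgx _).trans ?_))
  have hofFun {f f' : ι → k} (h : ∀ N, f N = f' N) : (f : (W : Filter ι).Germ k) = f' :=
    congrArg Germ.ofFun (funext h)
  cases F with
  | add =>
    exact (hofFun fun N => map_add (j N) (x 0 N) (x 1 N)).trans
      (congrArg₂ (· + ·) (hgx (x 0)) (hgx (x 1))).symm
  | mul =>
    exact (hofFun fun N => map_mul (j N) (x 0 N) (x 1 N)).trans
      (congrArg₂ (· * ·) (hgx (x 0)) (hgx (x 1))).symm
  | neg =>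
    exact (hofFun fun N => map_neg (j N) (x 0 N)).trans (congrArg (- ·) (hgx (x 0))).symm
  | zero => exact hofFun fun N => map_zero (j N)
  | one => exact hofFun fun N => map_one (j N)

lemma fixedField_germFrobenius_models_iff
    (hj : ∀ᶠ N in W, ∀ y, y ^ p ^ κ N = y ↔ y ∈ (j N).range) (σ : Language.ring.Sentence) :
    fixedField (germFrobenius (k := k) W p κ) ⊨ σ ↔ ∀ᶠ N in W, E N ⊨ σ := by
  obtain ⟨e⟩ := nonempty_product_equiv_fixedField hj
  rw [← Ultraproduct.sentence_realize]
  exact (StrongHomClass.realize_sentence e σ).symm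

end Frobenius

lemma pow_card_eq_self_iff_mem_range {E K : Type*} [Field E] [Fintype E] [Field K]
    (j : E →+* K) {y : K} : y ^ Fintype.card E = y ↔ y ∈ j.range := by
  refine ⟨fun hy => ?_, ?_⟩
  · have hsplits : (X ^ Fintype.card E - X : E[X]).Splits :=
      splits_iff_card_roots.2 (by
        rw [FiniteField.roots_X_pow_card_sub_X,
          FiniteField.X_pow_card_sub_X_natDegree_eq E Fintype.one_lt_card]
        rfl)
    refine hsplits.mem_range_of_isRoot
      (FiniteField.X_pow_card_sub_X_ne_zero E Fintype.one_lt_card) ?_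
    simp [hy]
  · rintro ⟨x, rfl⟩
    rw [← map_pow, FiniteField.pow_card]

section GaloisField

variable {p : ℕ} [Fact p.Prime]

lemma pow_pow_eq_self_iff_mem_range {K : Type*} [Field K] {n : ℕ} (hn : n ≠ 0)
    (j : GaloisField p n →+* K) {y : K} : y ^ p ^ n = y ↔ y ∈ j.range := by
  let : Fintype (GaloisField p n) := Fintype.ofFinite _
  rw [← pow_card_eq_self_iff_mem_range, ← Nat.card_eq_fintype_card, GaloisField.card p n hn]

variable {W : Ultrafilter ℕ} {κ : ℕ → ℕ}

lemma fixedField_germFrobenius_models_iff_galoisField (hκ : Tendsto κ W atTop)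
    (σ : Language.ring.Sentence) :
    fixedField (germFrobenius (k := AlgebraicClosure (ZMod p)) W p κ) ⊨ σ ↔
      ∀ᶠ N in W, RingSentenceHolds σ (GaloisField p (κ N)) := by
  let j (N : ℕ) : GaloisField p (κ N) →+* AlgebraicClosure (ZMod p) :=
    (IsAlgClosed.lift : _ →ₐ[ZMod p] _).toRingHom
  exact fixedField_germFrobenius_models_iff (j := j) ((hκ.eventually_ne_atTop 0).mono
    fun N hN y => pow_pow_eq_self_iff_mem_range hN (j N)) σ

lemma eventually_ringSentenceHolds_galoisField_add_factorial (hW : (W : Filter ℕ) ≤ atTop)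
    (hκ : Tendsto κ W atTop) (σ : Language.ring.Sentence) :
    (∀ᶠ N in W, RingSentenceHolds σ (GaloisField p (κ N))) ↔
      ∀ᶠ N in W, RingSentenceHolds σ (GaloisField p (κ N + N.factorial)) := by
  have hκ' : Tendsto (fun N => κ N + N.factorial) W atTop :=
    tendsto_atTop_mono (fun N => Nat.le_add_right ..) hκ
  rw [← fixedField_germFrobenius_models_iff_galoisField hκ,
    ← fixedField_germFrobenius_models_iff_galoisField hκ']
  exact ((similar_of_isEmpty hW κ Fin.elim0 Fin.elim0).fixedField_elementarilyEquivalent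
    hκ hκ').realize_sentence σ

end GaloisField

end ElementaryEquivalence

end EventualPeriodicity

/-- For a fixed prime `p`, the truth of a ring-language sentence `σ` in the finite fields
`GaloisField p k` is eventually periodic in the exponent `k`. -/
theorem sentence_eventually_periodic (σ : Language.ring.Sentence)
    (p : ℕ) [Fact p.Prime] :
    ∃ K n : ℕ, 1 ≤ n ∧ ∀ k : ℕ, K ≤ k →
      (RingSentenceHolds σ (GaloisField p k) ↔
        RingSentenceHolds σ (GaloisField p (k + n))) := by
  by_contra hperiodic
  have hfail (N : ℕ) : ∃ k, N ≤ k ∧ ¬(RingSentenceHolds σ (GaloisField p k) ↔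
      RingSentenceHolds σ (GaloisField p (k + N.factorial))) := by
    by_contra! hN
    exact hperiodic ⟨N, _, N.factorial_pos, hN⟩
  choose κ hκ hne using hfail
  let W := Filter.hyperfilter ℕ
  have hW : (W : Filter ℕ) ≤ Filter.atTop := Nat.hyperfilter_le_atTop
  have htransfer := EventualPeriodicity.eventually_ringSentenceHolds_galoisField_add_factorial
    (p := p) hW (Filter.tendsto_atTop_mono hκ hW) σ
  obtain ⟨N, hN, hN'⟩ := ((Ultrafilter.eventually_imp.2 htransfer.1).and
    (Ultrafilter.eventually_imp.2 htransfer.2)).exists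
  exact hne N ⟨hN, hN'⟩
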